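/- arXiv:0805.3437 — 3 statements merged into one kernel-verified Lean document; each statement's English description precedes it below -/
import Mathlib

section
/- Let M be a finite-dimensional (α,β)-Yetter-Drinfeld module. Then M^◇ and ◇M are (β,α)-Yetter-Drinfeld modules. -/
open TensorProduct

noncomputable section

namespace GYD

variable (k H : Type) [Field k] [Ring H] [HopfAlgebra k H]

/-- `φ` is a Hopf algebra automorphism of `H` (a linear equivalence which is both an
algebra morphism and a coalgebra morphism). -/
def IsHopfAut (φ : H ≃ₗ[k] H) : Prop :=
  (∀ x y : H, φ (x * y) = φ x * φ y) ∧ (φ 1 = 1) ∧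
  (∀ h : H, Coalgebra.comul (R := k) (φ h)
      = TensorProduct.map φ.toLinearMap φ.toLinearMap (Coalgebra.comul (R := k) h)) ∧
  (∀ h : H, Coalgebra.counit (R := k) (φ h) = Coalgebra.counit (R := k) h)

/-- `Sinv` is a two-sided inverse of the antipode of `H`. -/
def IsAntipodeInv (Sinv : H → H) : Prop :=
  (∀ h : H, HopfAlgebra.antipode (R := k) (Sinv h) = h) ∧
  (∀ h : H, Sinv (HopfAlgebra.antipode (R := k) h) = h)

/-- The data `(act, coact)` makes `M` an `(α, β)`-Yetter-Drinfeld module over `H`: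
`M` is a left `H`-module, a right `H`-comodule, and the compatibility
`(h·m)₍₀₎ ⊗ (h·m)₍₁₎ = h₂·m₍₀₎ ⊗ β(h₃) m₍₁₎ α(Sinv(h₁))` holds (expressed via
arbitrary finite representations of `(Δ ⊗ id)(Δ h)` and of `coact m`). -/
def IsYD (Sinv α β : H → H) {M : Type} [AddCommGroup M] [Module k M]
    (act : H →ₗ[k] M →ₗ[k] M) (coact : M →ₗ[k] M ⊗[k] H) : Prop :=
  (∀ m : M, act 1 m = m) ∧
  (∀ (g h : H) (m : M), act (g * h) m = act g (act h m)) ∧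
  (∀ m : M, LinearMap.rTensor H coact (coact m)
      = (TensorProduct.assoc k M H H).symm
          (LinearMap.lTensor M (Coalgebra.comul (R := k)) (coact m))) ∧
  (∀ m : M,
    TensorProduct.rid k M (LinearMap.lTensor M (Coalgebra.counit (R := k)) (coact m)) = m) ∧
  (∀ (h : H) (m : M) (s t : Finset ℕ) (a b c : ℕ → H) (m₀ : ℕ → M) (m₁ : ℕ → H),
    LinearMap.rTensor H (Coalgebra.comul (R := k)) (Coalgebra.comul (R := k) h)
        = ∑ i ∈ s, (a i ⊗ₜ[k] b i) ⊗ₜ[k] c i →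
    coact m = ∑ j ∈ t, m₀ j ⊗ₜ[k] m₁ j →
    coact (act h m) = ∑ i ∈ s, ∑ j ∈ t,
      act (b i) (m₀ j) ⊗ₜ[k] (β (c i) * m₁ j * α (Sinv (a i))))

/-- Characterization of the action `h · (m ⊗ n) = θ₁(h₁)·m ⊗ θ₂(h₂)·n` on `M ⊗ N`. -/
def TensorActChar (θ₁ θ₂ : H → H) {M N : Type} [AddCommGroup M] [Module k M]
    [AddCommGroup N] [Module k N]
    (actM : H →ₗ[k] M →ₗ[k] M) (actN : H →ₗ[k] N →ₗ[k] N)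
    (act : H →ₗ[k] (M ⊗[k] N) →ₗ[k] (M ⊗[k] N)) : Prop :=
  ∀ (h : H) (m : M) (n : N) (s : Finset ℕ) (p q : ℕ → H),
    Coalgebra.comul (R := k) h = ∑ i ∈ s, p i ⊗ₜ[k] q i →
    act h (m ⊗ₜ[k] n) = ∑ i ∈ s, actM (θ₁ (p i)) m ⊗ₜ[k] actN (θ₂ (q i)) n

/-- Characterization of the "type two" action `h · (m ⊗ n) = h₂·m ⊗ h₁·n` on `M ⊗ N`. -/
def TensorActCharTwo {M N : Type} [AddCommGroup M] [Module k M]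
    [AddCommGroup N] [Module k N]
    (actM : H →ₗ[k] M →ₗ[k] M) (actN : H →ₗ[k] N →ₗ[k] N)
    (act : H →ₗ[k] (M ⊗[k] N) →ₗ[k] (M ⊗[k] N)) : Prop :=
  ∀ (h : H) (m : M) (n : N) (s : Finset ℕ) (p q : ℕ → H),
    Coalgebra.comul (R := k) h = ∑ i ∈ s, p i ⊗ₜ[k] q i →
    act h (m ⊗ₜ[k] n) = ∑ i ∈ s, actM (q i) m ⊗ₜ[k] actN (p i) n

/-- Characterization of the coaction `m ⊗ n ↦ (m₍₀₎ ⊗ n₍₀₎) ⊗ n₍₁₎ m₍₁₎` on `M ⊗ N`. -/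
def TensorCoactChar {M N : Type} [AddCommGroup M] [Module k M]
    [AddCommGroup N] [Module k N]
    (coactM : M →ₗ[k] M ⊗[k] H) (coactN : N →ₗ[k] N ⊗[k] H)
    (coact : M ⊗[k] N →ₗ[k] (M ⊗[k] N) ⊗[k] H) : Prop :=
  ∀ (m : M) (n : N) (s t : Finset ℕ) (m₀ : ℕ → M) (m₁ : ℕ → H) (n₀ : ℕ → N) (n₁ : ℕ → H),
    coactM m = ∑ i ∈ s, m₀ i ⊗ₜ[k] m₁ i →
    coactN n = ∑ j ∈ t, n₀ j ⊗ₜ[k] n₁ j →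
    coact (m ⊗ₜ[k] n) = ∑ i ∈ s, ∑ j ∈ t, (m₀ i ⊗ₜ[k] n₀ j) ⊗ₜ[k] (n₁ j * m₁ i)

/-- Characterization of the "type two" coaction `m ⊗ n ↦ (m₍₀₎ ⊗ n₍₀₎) ⊗ m₍₁₎ n₍₁₎`. -/
def TensorCoactCharTwo {M N : Type} [AddCommGroup M] [Module k M]
    [AddCommGroup N] [Module k N]
    (coactM : M →ₗ[k] M ⊗[k] H) (coactN : N →ₗ[k] N ⊗[k] H)
    (coact : M ⊗[k] N →ₗ[k] (M ⊗[k] N) ⊗[k] H) : Prop :=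
  ∀ (m : M) (n : N) (s t : Finset ℕ) (m₀ : ℕ → M) (m₁ : ℕ → H) (n₀ : ℕ → N) (n₁ : ℕ → H),
    coactM m = ∑ i ∈ s, m₀ i ⊗ₜ[k] m₁ i →
    coactN n = ∑ j ∈ t, n₀ j ⊗ₜ[k] n₁ j →
    coact (m ⊗ₜ[k] n) = ∑ i ∈ s, ∑ j ∈ t, (m₀ i ⊗ₜ[k] n₀ j) ⊗ₜ[k] (m₁ i * n₁ j)

/-- Characterization of the action `(h · f)(m) = f (θ(h) · m)` on the dual space. -/
def DualActChar (θ : H → H) {M : Type} [AddCommGroup M] [Module k M]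
    (actM : H →ₗ[k] M →ₗ[k] M)
    (actD : H →ₗ[k] Module.Dual k M →ₗ[k] Module.Dual k M) : Prop :=
  ∀ (h : H) (f : Module.Dual k M) (m : M), actD h f m = f (actM (θ h) m)

/-- Characterization of the coaction `f₍₀₎(m) ⊗ f₍₁₎ = f(m₍₀₎) ⊗ σ(m₍₁₎)` on the dual space
(expressed through contraction against evaluation at each `m`). -/
def DualCoactChar (σ : H → H) {M : Type} [AddCommGroup M] [Module k M]
    (coactM : M →ₗ[k] M ⊗[k] H)
    (coactD : Module.Dual k M →ₗ[k] Module.Dual k M ⊗[k] H) : Prop :=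
  ∀ (f : Module.Dual k M) (m : M) (t : Finset ℕ) (m₀ : ℕ → M) (m₁ : ℕ → H),
    coactM m = ∑ j ∈ t, m₀ j ⊗ₜ[k] m₁ j →
    TensorProduct.lid k H (LinearMap.rTensor H (Module.Dual.eval k M m) (coactD f))
      = ∑ j ∈ t, f (m₀ j) • σ (m₁ j)

/-- Characterization of the action `(h · u)(m) = θ(h₁) · u (θ(S(h₂)) · m)` on `End(M)`. -/
def EndActChar (θ : H → H) {M : Type} [AddCommGroup M] [Module k M]
    (actM : H →ₗ[k] M →ₗ[k] M)
    (actE : H →ₗ[k] Module.End k M →ₗ[k] Module.End k M) : Prop :=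
  ∀ (h : H) (u : Module.End k M) (m : M) (s : Finset ℕ) (p q : ℕ → H),
    Coalgebra.comul (R := k) h = ∑ i ∈ s, p i ⊗ₜ[k] q i →
    actE h u m = ∑ i ∈ s,
      actM (θ (p i)) (u (actM (θ (HopfAlgebra.antipode (R := k) (q i))) m))

/-- Characterization of the coaction `u₍₀₎(m) ⊗ u₍₁₎ = u(m₍₀₎)₍₀₎ ⊗ Sinv(m₍₁₎) u(m₍₀₎)₍₁₎`
on `End(M)`, expressed through contraction against evaluation at each `m`. -/
def EndCoactChar (Sinv : H → H) {M : Type} [AddCommGroup M] [Module k M]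
    (coactM : M →ₗ[k] M ⊗[k] H)
    (coactE : Module.End k M →ₗ[k] Module.End k M ⊗[k] H) : Prop :=
  ∀ (u : Module.End k M) (m : M) (t : Finset ℕ) (m₀ : ℕ → M) (m₁ : ℕ → H)
    (r : ℕ → Finset ℕ) (n₀ : ℕ → ℕ → M) (n₁ : ℕ → ℕ → H),
    coactM m = ∑ j ∈ t, m₀ j ⊗ₜ[k] m₁ j →
    (∀ j ∈ t, coactM (u (m₀ j)) = ∑ l ∈ r j, n₀ j l ⊗ₜ[k] n₁ j l) →
    LinearMap.rTensor H (LinearMap.applyₗ (R := k) m) (coactE u)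
      = ∑ j ∈ t, ∑ l ∈ r j, n₀ j l ⊗ₜ[k] (Sinv (m₁ j) * n₁ j l)

/-- Characterization of the action `(h · u)(m) = θ(h₂) · u (θ(Sinv(h₁)) · m)` on `End(M)ᵒᵖ`. -/
def EndOpActChar (θ Sinv : H → H) {M : Type} [AddCommGroup M] [Module k M]
    (actM : H →ₗ[k] M →ₗ[k] M)
    (actE : H →ₗ[k] (Module.End k M)ᵐᵒᵖ →ₗ[k] (Module.End k M)ᵐᵒᵖ) : Prop :=
  ∀ (h : H) (u : (Module.End k M)ᵐᵒᵖ) (m : M) (s : Finset ℕ) (p q : ℕ → H),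
    Coalgebra.comul (R := k) h = ∑ i ∈ s, p i ⊗ₜ[k] q i →
    (actE h u).unop m = ∑ i ∈ s,
      actM (θ (q i)) (u.unop (actM (θ (Sinv (p i))) m))

/-- Characterization of the coaction `u₍₀₎(m) ⊗ u₍₁₎ = u(m₍₀₎)₍₀₎ ⊗ u(m₍₀₎)₍₁₎ S(m₍₁₎)`
on `End(M)ᵒᵖ`, expressed through contraction against evaluation at each `m`. -/
def EndOpCoactChar {M : Type} [AddCommGroup M] [Module k M]
    (coactM : M →ₗ[k] M ⊗[k] H)
    (coactE : (Module.End k M)ᵐᵒᵖ →ₗ[k] (Module.End k M)ᵐᵒᵖ ⊗[k] H) : Prop :=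
  ∀ (u : (Module.End k M)ᵐᵒᵖ) (m : M) (t : Finset ℕ) (m₀ : ℕ → M) (m₁ : ℕ → H)
    (r : ℕ → Finset ℕ) (n₀ : ℕ → ℕ → M) (n₁ : ℕ → ℕ → H),
    coactM m = ∑ j ∈ t, m₀ j ⊗ₜ[k] m₁ j →
    (∀ j ∈ t, coactM (u.unop (m₀ j)) = ∑ l ∈ r j, n₀ j l ⊗ₜ[k] n₁ j l) →
    LinearMap.rTensor H ((LinearMap.applyₗ (R := k) m).comp
        (MulOpposite.opLinearEquiv k).symm.toLinearMap) (coactE u)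
      = ∑ j ∈ t, ∑ l ∈ r j,
          n₀ j l ⊗ₜ[k] (n₁ j l * HopfAlgebra.antipode (R := k) (m₁ j))

/-- `A`, with the Yetter-Drinfeld structure `(act, coact)`, is an algebra in the braided
category of Yetter-Drinfeld modules over `H`. -/
def IsYDAlgebra (Sinv : H → H) {A : Type} [Ring A] [Algebra k A]
    (act : H →ₗ[k] A →ₗ[k] A) (coact : A →ₗ[k] A ⊗[k] H) : Prop :=
  IsYD k H Sinv id id act coact ∧
  (∀ (h : H) (a b : A) (s : Finset ℕ) (p q : ℕ → H),
    Coalgebra.comul (R := k) h = ∑ i ∈ s, p i ⊗ₜ[k] q i →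
    act h (a * b) = ∑ i ∈ s, act (p i) a * act (q i) b) ∧
  (∀ h : H, act h 1 = Coalgebra.counit (R := k) h • (1 : A)) ∧
  (coact 1 = (1 : A) ⊗ₜ[k] (1 : H)) ∧
  (∀ (a b : A) (s t : Finset ℕ) (a₀ : ℕ → A) (a₁ : ℕ → H) (b₀ : ℕ → A) (b₁ : ℕ → H),
    coact a = ∑ i ∈ s, a₀ i ⊗ₜ[k] a₁ i →
    coact b = ∑ j ∈ t, b₀ j ⊗ₜ[k] b₁ j →
    coact (a * b) = ∑ i ∈ s, ∑ j ∈ t, (a₀ i * b₀ j) ⊗ₜ[k] (b₁ j * a₁ i))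

/-- Characterization of the smash product multiplication
`(a # b)(a' # b') = a a'₍₀₎ # (a'₍₁₎ · b) b'` on `A ⊗ B`. -/
def SmashMulChar {A B : Type} [Ring A] [Algebra k A] [Ring B] [Algebra k B]
    (actB : H →ₗ[k] B →ₗ[k] B) (coactA : A →ₗ[k] A ⊗[k] H)
    (mul : (A ⊗[k] B) →ₗ[k] (A ⊗[k] B) →ₗ[k] (A ⊗[k] B)) : Prop :=
  ∀ (a a' : A) (b b' : B) (t : Finset ℕ) (a₀ : ℕ → A) (a₁ : ℕ → H),
    coactA a' = ∑ j ∈ t, a₀ j ⊗ₜ[k] a₁ j →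
    mul (a ⊗ₜ[k] b) (a' ⊗ₜ[k] b') = ∑ j ∈ t, (a * a₀ j) ⊗ₜ[k] (actB (a₁ j) b * b')

end GYD


namespace GYDAux

open Coalgebra WithConv

lemma list_to_nat {ι V : Type} [AddCommMonoid V] (d : ι) (F : ι → V) (l : List ι) :
    ∃ (t : Finset ℕ) (g : ℕ → ι), (l.map F).sum = ∑ j ∈ t, F (g j) := by
  refine ⟨Finset.range l.length, fun j => l.getD j d, ?_⟩
  induction l with
  | nil => simp
  | cons a l ih =>
    rw [List.map_cons, List.sum_cons, ih, List.length_cons, Finset.sum_range_succ', add_comm]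
    simp

section
variable {k : Type} [Field k] {A B C : Type} [AddCommGroup A] [Module k A]
  [AddCommGroup B] [Module k B] [AddCommGroup C] [Module k C]

lemma rep2 (x : A ⊗[k] B) : ∃ (t : Finset ℕ) (a : ℕ → A) (b : ℕ → B),
    x = ∑ j ∈ t, a j ⊗ₜ[k] b j := by
  have : ∃ l : List (A × B), x = (l.map fun p => p.1 ⊗ₜ[k] p.2).sum := by
    induction x with
    | zero => exact ⟨[], by simp⟩
    | tmul a b => exact ⟨[(a, b)], by simp⟩
    | add x y hx hy =>
      obtain ⟨l, rfl⟩ := hx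
      obtain ⟨l', rfl⟩ := hy
      exact ⟨l ++ l', by simp⟩
  obtain ⟨l, hl⟩ := this
  obtain ⟨t, g, h⟩ := list_to_nat (0, 0) (fun p : A × B => p.1 ⊗ₜ[k] p.2) l
  exact ⟨t, fun j => (g j).1, fun j => (g j).2, hl.trans h⟩

lemma rep3 (x : (A ⊗[k] B) ⊗[k] C) : ∃ (t : Finset ℕ) (a : ℕ → A) (b : ℕ → B) (c : ℕ → C),
    x = ∑ j ∈ t, (a j ⊗ₜ[k] b j) ⊗ₜ[k] c j := by
  have : ∃ l : List (A × B × C), x = (l.map fun p => (p.1 ⊗ₜ[k] p.2.1) ⊗ₜ[k] p.2.2).sum := by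
    induction x with
    | zero => exact ⟨[], by simp⟩
    | tmul u c =>
      induction u with
      | zero => exact ⟨[], by simp⟩
      | tmul a b => exact ⟨[(a, b, c)], by simp⟩
      | add x y hx hy =>
        obtain ⟨l, hl⟩ := hx
        obtain ⟨l', hl'⟩ := hy
        exact ⟨l ++ l', by simp [add_tmul, hl, hl']⟩
    | add x y hx hy =>
      obtain ⟨l, rfl⟩ := hx
      obtain ⟨l', rfl⟩ := hy
      exact ⟨l ++ l', by simp⟩
  obtain ⟨l, hl⟩ := this
  obtain ⟨t, g, h⟩ := list_to_nat (0, 0, 0)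
    (fun p : A × B × C => (p.1 ⊗ₜ[k] p.2.1) ⊗ₜ[k] p.2.2) l
  exact ⟨t, fun j => (g j).1, fun j => (g j).2.1, fun j => (g j).2.2, hl.trans h⟩

lemma dual_ext [FiniteDimensional k A] {x y : Module.Dual k A ⊗[k] B}
    (h : ∀ m, dualTensorHom k A B x m = dualTensorHom k A B y m) : x = y := by
  apply (dualTensorHomEquiv k A B).injective
  ext m
  simpa using h m

lemma lid_eval (x : Module.Dual k A ⊗[k] B) (m : A) :
    TensorProduct.lid k B (LinearMap.rTensor B (Module.Dual.eval k A m) x)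
      = dualTensorHom k A B x m := by
  induction x with
  | zero => simp
  | tmul f b => simp
  | add x y hx hy => simp [hx, hy]
end

section
variable {k H : Type} [Field k] [Ring H] [HopfAlgebra k H]

lemma conv3 {A : Type} [Ring A] [Algebra k A] (f g e : WithConv (H →ₗ[k] A)) (h : H)
    (s : Finset ℕ) (a b c : ℕ → H)
    (hr : LinearMap.rTensor H (comul (R := k)) (comul (R := k) h)
        = ∑ i ∈ s, (a i ⊗ₜ[k] b i) ⊗ₜ[k] c i) :
    (f * g * e) h = ∑ i ∈ s, f (a i) * g (b i) * e (c i) := by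
  have h1 : (f * g * e) h = LinearMap.mul' k A (TensorProduct.map
      (LinearMap.mul' k A ∘ₗ TensorProduct.map f.ofConv g.ofConv) e.ofConv
      (LinearMap.rTensor H (comul (R := k)) (comul (R := k) h))) := by
    rw [LinearMap.convMul_apply, LinearMap.convMul_def]
    simp only [ofConv_toConv]
    rw [← LinearMap.comp_apply (TensorProduct.map _ _) (LinearMap.rTensor _ _),
      LinearMap.map_comp_rTensor]
    rfl
  rw [h1, hr]
  simp [LinearMap.mul'_apply]

/-- `θ` is anticomultiplicative. -/
def AC (θ : H →ₗ[k] H) : Prop := ∀ h, comul (R := k) (θ h)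
  = TensorProduct.map θ θ (TensorProduct.comm k H H (comul (R := k) h))

lemma antipode_AC : AC (HopfAlgebra.antipode k (A := H)) := by
  let il : H →ₐ[k] H ⊗[k] H := Algebra.TensorProduct.includeLeft
  let ir : H →ₐ[k] H ⊗[k] H := Algebra.TensorProduct.includeRight
  let S := HopfAlgebra.antipode k (A := H)
  have hl : toConv (il.toLinearMap ∘ₗ S) * toConv il.toLinearMap = 1 := by
    have := LinearMap.algHom_comp_convMul_distrib il (toConv S) (toConv LinearMap.id)
    rw [LinearMap.antipode_mul_id] at this
    apply WithConv.ofConv_injective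
    rw [LinearMap.comp_id] at this
    rw [← this]
    ext x
    simp [LinearMap.convOne_def]
  have hr : toConv (ir.toLinearMap ∘ₗ S) * toConv ir.toLinearMap = 1 := by
    have := LinearMap.algHom_comp_convMul_distrib ir (toConv S) (toConv LinearMap.id)
    rw [LinearMap.antipode_mul_id] at this
    apply WithConv.ofConv_injective
    rw [LinearMap.comp_id] at this
    rw [← this]
    ext x
    simp [LinearMap.convOne_def]
  have hd : toConv (comul (R := k) (A := H)) = toConv il.toLinearMap * toConv ir.toLinearMap := by
    ext h
    rw [(ℛ k h).convMul_apply]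
    simp [il, ir, (ℛ k h).eq]
  have hG : toConv (TensorProduct.map S S ∘ₗ (TensorProduct.comm k H H).toLinearMap
      ∘ₗ comul (R := k)) = toConv (ir.toLinearMap ∘ₗ S) * toConv (il.toLinearMap ∘ₗ S) := by
    ext h
    rw [(ℛ k h).convMul_apply]
    simp [il, ir, ← (ℛ k h).eq]
  have key : toConv (TensorProduct.map S S ∘ₗ (TensorProduct.comm k H H).toLinearMap
      ∘ₗ comul (R := k)) * toConv (comul (R := k) (A := H)) = 1 := by
    rw [hG, hd, mul_assoc, ← mul_assoc (toConv (il.toLinearMap ∘ₗ S)), hl, one_mul, hr]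
  have := left_inv_eq_right_inv key LinearMap.comul_right_inv
  intro h
  exact (congrArg (fun f => f.ofConv h) this).symm

lemma AC.rep3 {θ : H →ₗ[k] H} (hθ : AC θ) (h : H) (s : Finset ℕ) (a b c : ℕ → H)
    (hr : LinearMap.rTensor H (comul (R := k)) (comul (R := k) h)
        = ∑ i ∈ s, (a i ⊗ₜ[k] b i) ⊗ₜ[k] c i) :
    LinearMap.rTensor H (comul (R := k)) (comul (R := k) (θ h))
        = ∑ i ∈ s, (θ (c i) ⊗ₜ[k] θ (b i)) ⊗ₜ[k] θ (a i) := by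
  let rev : H ⊗[k] (H ⊗[k] H) →ₗ[k] (H ⊗[k] H) ⊗[k] H :=
    TensorProduct.map (TensorProduct.map θ θ ∘ₗ (TensorProduct.comm k H H).toLinearMap) θ
      ∘ₗ (TensorProduct.comm k H (H ⊗[k] H)).toLinearMap
  have h1 : ∀ x : H ⊗[k] H, LinearMap.rTensor H (comul (R := k))
      (TensorProduct.map θ θ (TensorProduct.comm k H H x))
      = rev (LinearMap.lTensor H (comul (R := k)) x) := by
    intro x
    induction x with
    | zero => simp
    | tmul x y => simp [rev, hθ y]
    | add x y hx hy => simp only [map_add, hx, hy]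
  rw [hθ h, h1, ← Coalgebra.coassoc_apply, hr]
  simp [rev]

/-- Main lemma. -/
lemma main (T θ σ : H →ₗ[k] H) (α β : H ≃ₗ[k] H)
    (hα : GYD.IsHopfAut k H α) (hβ : GYD.IsHopfAut k H β)
    (hT : toConv ((MulOpposite.opLinearEquiv k).toLinearMap ∘ₗ T)
      * toConv (MulOpposite.opLinearEquiv k (M := H)).toLinearMap = 1)
    (hσθ : ∀ h, σ (θ h) = h) (hTθ : ∀ h, T (θ h) = θ (T h))
    (hθ1 : θ 1 = 1) (hθm : ∀ x y, θ (x * y) = θ y * θ x) (hθc : AC θ)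
    (hσm : ∀ x y, σ (x * y) = σ y * σ x) (hσc : AC σ)
    (hσe : ∀ x, counit (R := k) (σ x) = counit (R := k) x)
    (hσα : ∀ x, σ (α x) = α (σ x)) (hσβ : ∀ x, σ (β x) = β (σ x))
    (M : Type) [AddCommGroup M] [Module k M] [FiniteDimensional k M]
    (actM : H →ₗ[k] M →ₗ[k] M) (coactM : M →ₗ[k] M ⊗[k] H)
    (hM : GYD.IsYD k H T ⇑α ⇑β actM coactM)
    (actD : H →ₗ[k] Module.Dual k M →ₗ[k] Module.Dual k M)
    (coactD : Module.Dual k M →ₗ[k] Module.Dual k M ⊗[k] H)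
    (hactD : GYD.DualActChar k H θ actM actD)
    (hcoactD : GYD.DualCoactChar k H σ coactM coactD) :
    GYD.IsYD k H T ⇑β ⇑α actD coactD := by
  obtain ⟨hM1, hM2, hM3, hM4, hM5⟩ := hM
  let K : Module.Dual k M → (M ⊗[k] H →ₗ[k] H) := fun f =>
    (TensorProduct.lid k H).toLinearMap ∘ₗ TensorProduct.map f σ
  have hK : ∀ f m, dualTensorHom k M H (coactD f) m = K f (coactM m) := by
    intro f m
    obtain ⟨t, m₀, m₁, h⟩ := rep2 (coactM m)
    rw [← lid_eval, hcoactD f m t m₀ m₁ h, h]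
    simp [K]
  refine ⟨?_, ?_, ?_, ?_, ?_⟩
  · intro f
    ext m
    rw [hactD, hθ1, hM1]
  · intro g h f
    ext m
    rw [hactD, hactD, hactD, hθm, hM2]
  · intro f
    rw [LinearEquiv.eq_symm_apply]
    apply dual_ext
    intro m
    have hL : ∀ x : Module.Dual k M ⊗[k] H,
        dualTensorHom k M (H ⊗[k] H)
          (TensorProduct.assoc k _ H H (LinearMap.rTensor H coactD x)) m
        = TensorProduct.comm k H H
            (TensorProduct.map (dualTensorHom k M H x) σ (coactM m)) := by
      intro x
      induction x with
      | zero => simp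
      | tmul g y =>
        have h1 : ∀ z : Module.Dual k M ⊗[k] H, dualTensorHom k M (H ⊗[k] H)
          (TensorProduct.assoc k _ H H (z ⊗ₜ y)) m = dualTensorHom k M H z m ⊗ₜ y := by
          intro z
          induction z with
          | zero => simp
          | tmul g z => simp [smul_tmul']
          | add x y hx hy => simp [add_tmul, hx, hy]
        rw [LinearMap.rTensor_tmul, h1, hK]
        generalize coactM m = u
        induction u with
        | zero => simp
        | tmul u v => simp [K, smul_tmul']
        | add x y hx hy => simp only [map_add, add_tmul, hx, hy]
      | add x y hx hy => simp only [map_add, hx, hy, LinearMap.add_apply, TensorProduct.map_add_left]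
    have hR : ∀ x : Module.Dual k M ⊗[k] H,
        dualTensorHom k M (H ⊗[k] H) (LinearMap.lTensor _ (comul (R := k)) x) m
        = comul (R := k) (dualTensorHom k M H x m) := by
      intro x
      induction x with
      | zero => simp
      | tmul g y => simp
      | add x y hx hy => simp only [map_add, hx, hy, LinearMap.add_apply]
    rw [hL, hR, hK]
    have h2 : dualTensorHom k M H (coactD f) = K f ∘ₗ coactM := by
      ext m; exact hK f m
    rw [h2, ← LinearMap.map_comp_rTensor, LinearMap.comp_apply, hM3]
    generalize coactM m = u
    induction u with
    | zero => simp
    | tmul u v =>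
      simp only [K, LinearMap.lTensor_tmul, LinearMap.comp_apply, TensorProduct.map_tmul,
        LinearEquiv.coe_coe, TensorProduct.lid_tmul, map_smul]
      rw [hσc v]
      generalize comul (R := k) v = w
      induction w with
      | zero => simp
      | tmul w w' => simp
      | add x y hx hy => simp only [map_add, tmul_add, smul_add, hx, hy]
    | add x y hx hy => simp only [map_add, hx, hy]
  · intro f
    ext m
    have h1 : ∀ x : Module.Dual k M ⊗[k] H,
        TensorProduct.rid k _ (LinearMap.lTensor _ (counit (R := k)) x) m
        = counit (R := k) (dualTensorHom k M H x m) := by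
      intro x
      induction x with
      | zero => simp
      | tmul g y => simp [mul_comm]
      | add x y hx hy => simp only [map_add, hx, hy, LinearMap.add_apply]
    rw [h1, hK]
    conv_rhs => rw [← hM4 m]
    generalize coactM m = u
    induction u with
    | zero => simp
    | tmul u v => simp [K, hσe, mul_comm]
    | add x y hx hy => simp only [map_add, hx, hy]
  · intro h f s t a b c g x hr hg
    apply dual_ext
    intro m
    obtain ⟨r, m₀, m₁, hm⟩ := rep2 (coactM m)
    choose q X Y Z hXYZ using fun i : ℕ =>
      rep3 (LinearMap.rTensor H (comul (R := k)) (comul (R := k) (b i)))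
    have hin : ∀ i, ∑ j ∈ t, (g j) (actM (θ (b i)) m) • x j
        = ∑ p ∈ q i, ∑ l ∈ r, f (actM (θ (Y i p)) (m₀ l)) •
            (α (T (Z i p)) * σ (m₁ l) * β (X i p)) := by
      intro i
      have e1 : ∑ j ∈ t, (g j) (actM (θ (b i)) m) • x j
          = dualTensorHom k M H (coactD f) (actM (θ (b i)) m) := by
        rw [hg]; simp
      rw [e1, hK, hM5 (θ (b i)) m (q i) r _ _ _ m₀ m₁ (hθc.rep3 _ _ _ _ _ (hXYZ i)) hm]
      simp [K, hσm, hσα, hσβ, hσθ, hTθ, mul_assoc]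
    have hL : dualTensorHom k M H (coactD (actD h f)) m
        = ∑ l ∈ r, f (actM (θ h) (m₀ l)) • σ (m₁ l) := by
      rw [hK, hm]
      simp [K, hactD h f]
    have hR : dualTensorHom k M H (∑ i ∈ s, ∑ j ∈ t,
        actD (b i) (g j) ⊗ₜ[k] (α (c i) * x j * β (T (a i)))) m
        = ∑ i ∈ s, α (c i) * (∑ j ∈ t, (g j) (actM (θ (b i)) m) • x j) * β (T (a i)) := by
      simp [hactD _ _ _, Finset.mul_sum, Finset.sum_mul]
    rw [hL, hR]
    simp_rw [hin, Finset.mul_sum, Finset.sum_mul]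
    rw [Finset.sum_congr rfl (fun i _ => Finset.sum_comm), Finset.sum_comm]
    refine Finset.sum_congr rfl fun l _ => ?_
    -- the convolution computation
    let A := Hᵐᵒᵖ ⊗[k] Hᵐᵒᵖ
    let αm : Hᵐᵒᵖ →ₐ[k] Hᵐᵒᵖ := AlgHom.op (AlgHom.ofLinearMap α.toLinearMap hα.2.1 hα.1)
    let βm : Hᵐᵒᵖ →ₐ[k] Hᵐᵒᵖ := AlgHom.op (AlgHom.ofLinearMap β.toLinearMap hβ.2.1 hβ.1)
    let il : Hᵐᵒᵖ →ₐ[k] A := (Algebra.TensorProduct.includeLeft).comp βm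
    let ir : Hᵐᵒᵖ →ₐ[k] A := (Algebra.TensorProduct.includeRight).comp αm
    let o : H →ₗ[k] Hᵐᵒᵖ := (MulOpposite.opLinearEquiv k).toLinearMap
    have hcan : ∀ j : Hᵐᵒᵖ →ₐ[k] A,
        toConv (j.toLinearMap ∘ₗ o ∘ₗ T) * toConv (j.toLinearMap ∘ₗ o) = 1 := by
      intro j
      have := LinearMap.algHom_comp_convMul_distrib j (toConv (o ∘ₗ T)) (toConv o)
      rw [hT] at this
      apply WithConv.ofConv_injective
      rw [ofConv_toConv, ofConv_toConv] at this
      rw [← this]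
      ext x
      exact j.commutes _
    let φ₃ : WithConv (H →ₗ[k] A) :=
      toConv (Algebra.linearMap k A ∘ₗ f ∘ₗ actM.flip (m₀ l) ∘ₗ θ)
    let φ₁ := toConv (il.toLinearMap ∘ₗ o ∘ₗ T)
    let φ₂ := toConv (il.toLinearMap ∘ₗ o)
    let φ₄ := toConv (ir.toLinearMap ∘ₗ o ∘ₗ T)
    let φ₅ := toConv (ir.toLinearMap ∘ₗ o)
    have hprod : φ₁ * (φ₂ * φ₃ * φ₄) * φ₅ = φ₃ := by
      have h1 : φ₁ * φ₂ = 1 := hcan il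
      have h2 : φ₄ * φ₅ = 1 := hcan ir
      calc _ = (φ₁ * φ₂) * φ₃ * (φ₄ * φ₅) := by simp only [mul_assoc]
        _ = _ := by rw [h1, h2, one_mul, mul_one]
    let R : A →ₗ[k] H := TensorProduct.lift (LinearMap.mk₂ k
      (fun p q : Hᵐᵒᵖ => q.unop * σ (m₁ l) * p.unop)
      (by intros; simp [mul_add]) (by intros; simp)
      (by intros; simp [add_mul]) (by intros; simp))
    have hR1 : ∀ p q : Hᵐᵒᵖ, R (p ⊗ₜ q) = q.unop * σ (m₁ l) * p.unop := by
      intro p q; exact TensorProduct.lift.tmul _ _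
    have e := congrArg (fun φ : WithConv (H →ₗ[k] A) => R (φ h)) hprod
    replace e : R ((φ₁ * (φ₂ * φ₃ * φ₄) * φ₅) h) = R (φ₃ h) := e
    rw [conv3 _ _ _ h s a b c hr] at e
    rw [Finset.sum_congr rfl (fun i _ => by rw [conv3 _ _ _ (b i) (q i) _ _ _ (hXYZ i)])] at e
    have e3 : R (φ₃ h) = f (actM (θ h) (m₀ l)) • σ (m₁ l) := by
      have : φ₃ h = f (actM (θ h) (m₀ l)) • ((1 : Hᵐᵒᵖ) ⊗ₜ[k] (1 : Hᵐᵒᵖ)) := by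
        change algebraMap k A _ = _
        rw [Algebra.algebraMap_eq_smul_one]; rfl
      rw [this, map_smul, hR1]; simp
    rw [e3] at e
    rw [← e, map_sum]
    refine Finset.sum_congr rfl fun i _ => ?_
    rw [Finset.mul_sum, Finset.sum_mul, map_sum]
    refine Finset.sum_congr rfl fun p _ => ?_
    have e4 : φ₁ (a i) * (φ₂ (X i p) * φ₃ (Y i p) * φ₄ (Z i p)) * φ₅ (c i)
        = f (actM (θ (Y i p)) (m₀ l)) •
          ((MulOpposite.op (β (T (a i))) * MulOpposite.op (β (X i p))) ⊗ₜ[k]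
            (MulOpposite.op (α (T (Z i p))) * MulOpposite.op (α (c i)))) := by
      have f1 : φ₁ (a i) = MulOpposite.op (β (T (a i))) ⊗ₜ[k] 1 := rfl
      have f2 : φ₂ (X i p) = MulOpposite.op (β (X i p)) ⊗ₜ[k] 1 := rfl
      have f4 : φ₄ (Z i p) = 1 ⊗ₜ[k] MulOpposite.op (α (T (Z i p))) := rfl
      have f5 : φ₅ (c i) = 1 ⊗ₜ[k] MulOpposite.op (α (c i)) := rfl
      have f3 : φ₃ (Y i p) = f (actM (θ (Y i p)) (m₀ l)) • (1 : A) := by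
        change algebraMap k A _ = _
        rw [Algebra.algebraMap_eq_smul_one]; rfl
      rw [f1, f2, f3, f4, f5]
      simp only [A, mul_smul_comm, smul_mul_assoc, mul_one,
        Algebra.TensorProduct.tmul_mul_tmul, one_mul]
    rw [e4, map_smul, hR1]
    simp [mul_assoc]

lemma aut_antipode (α : H ≃ₗ[k] H) (hα : GYD.IsHopfAut k H α) (x : H) :
    HopfAlgebra.antipode k (α x) = α (HopfAlgebra.antipode k x) := by
  let S := HopfAlgebra.antipode k (A := H)
  let a : H →ₐ[k] H := AlgHom.ofLinearMap α.toLinearMap hα.2.1 hα.1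
  have h1 : toConv (α.toLinearMap ∘ₗ S) * toConv α.toLinearMap = 1 := by
    have := LinearMap.algHom_comp_convMul_distrib a (toConv S) (toConv LinearMap.id)
    rw [LinearMap.antipode_mul_id] at this
    apply WithConv.ofConv_injective
    rw [LinearMap.comp_id] at this
    refine Eq.trans this.symm ?_
    ext x
    simp [LinearMap.convOne_def]
  have h2 : toConv α.toLinearMap * toConv (S ∘ₗ α.toLinearMap) = 1 := by
    ext h
    have := congrArg (fun f => f (α h)) (LinearMap.id_mul_antipode (R := k) (C := H))
    simp only [LinearMap.convMul_apply, LinearMap.convOne_apply, hα.2.2.2, hα.2.2.1] at this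
    rw [LinearMap.convOne_apply, ← this, LinearMap.convMul_apply]
    generalize comul (R := k) h = u
    induction u with
    | zero => simp
    | tmul u v => simp [S]
    | add x y hx hy => simp only [map_add, hx, hy]
  have := left_inv_eq_right_inv h1 h2
  exact (congrArg (fun f => f.ofConv x) this).symm

end

end GYDAux

theorem statement_4
    (k H : Type) [Field k] [Ring H] [HopfAlgebra k H]
    (Sinv : H → H) (hS : GYD.IsAntipodeInv k H Sinv)
    (α β : H ≃ₗ[k] H)
    (hα : GYD.IsHopfAut k H α) (hβ : GYD.IsHopfAut k H β)
    (M : Type) [AddCommGroup M] [Module k M] [FiniteDimensional k M]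
    (actM : H →ₗ[k] M →ₗ[k] M) (coactM : M →ₗ[k] M ⊗[k] H)
    (hM : GYD.IsYD k H Sinv ⇑α ⇑β actM coactM)
    (actD : H →ₗ[k] Module.Dual k M →ₗ[k] Module.Dual k M)
    (coactD : Module.Dual k M →ₗ[k] Module.Dual k M ⊗[k] H)
    (hactD : GYD.DualActChar k H (fun h => HopfAlgebra.antipode (R := k) h) actM actD)
    (hcoactD : GYD.DualCoactChar k H Sinv coactM coactD)
    (actD' : H →ₗ[k] Module.Dual k M →ₗ[k] Module.Dual k M)
    (coactD' : Module.Dual k M →ₗ[k] Module.Dual k M ⊗[k] H)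
    (hactD' : GYD.DualActChar k H Sinv actM actD')
    (hcoactD' : GYD.DualCoactChar k H (fun h => HopfAlgebra.antipode (R := k) h) coactM coactD') :
    GYD.IsYD k H Sinv ⇑β ⇑α actD coactD ∧ GYD.IsYD k H Sinv ⇑β ⇑α actD' coactD' := by
  obtain ⟨hS1, hS2⟩ := hS
  let S := HopfAlgebra.antipode k (A := H)
  have hinj : Function.Injective S := Function.LeftInverse.injective hS2
  let T : H →ₗ[k] H :=
    { toFun := Sinv
      map_add' := fun x y => hinj (by rw [map_add]; simp only [S, hS1])
      map_smul' := fun c x => hinj (by rw [map_smul]; simp only [S, hS1, RingHom.id_apply]) }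
  have hT : (T : H → H) = Sinv := rfl
  have hS1' : ∀ h, S (T h) = h := hS1
  have hS2' : ∀ h, T (S h) = h := hS2
  have hSm : ∀ x y, S (x * y) = S y * S x := HopfAlgebra.antipode_mul_antidistrib
  have hTm : ∀ x y, T (x * y) = T y * T x := fun x y => hinj (by
    rw [hSm, hS1', hS1', hS1'])
  have hSc : GYDAux.AC S := GYDAux.antipode_AC
  have hTc : GYDAux.AC T := by
    intro h
    conv_rhs => rw [← hS1' h]
    rw [hSc (T h)]
    generalize Coalgebra.comul (R := k) (T h) = u
    induction u with
    | zero => simp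
    | tmul u v => simp [hS2']
    | add x y hx hy => rw [map_add, map_add, map_add, map_add, ← hx, ← hy]
  have hSe : ∀ x, Coalgebra.counit (R := k) (S x) = Coalgebra.counit (R := k) x :=
    HopfAlgebra.counit_antipode
  have hTe : ∀ x, Coalgebra.counit (R := k) (T x) = Coalgebra.counit (R := k) x := fun x => by
    rw [← hSe, hS1']
  have hSα : ∀ x, S (α x) = α (S x) := GYDAux.aut_antipode α hα
  have hSβ : ∀ x, S (β x) = β (S x) := GYDAux.aut_antipode β hβ
  have hTα : ∀ x, T (α x) = α (T x) := fun x => hinj (by rw [hSα, hS1', hS1'])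
  have hTβ : ∀ x, T (β x) = β (T x) := fun x => hinj (by rw [hSβ, hS1', hS1'])
  have hSone : S 1 = 1 := HopfAlgebra.antipode_one
  have hTone : T 1 = 1 := hinj (by rw [hS1', hSone])
  have hconv : WithConv.toConv ((MulOpposite.opLinearEquiv k).toLinearMap ∘ₗ T)
      * WithConv.toConv (MulOpposite.opLinearEquiv k (M := H)).toLinearMap = 1 := by
    ext h
    rw [(Coalgebra.Repr.arbitrary k h).convMul_apply, LinearMap.convOne_apply]
    apply MulOpposite.unop_injective
    apply hinj
    have := HopfAlgebra.sum_mul_antipode_eq_algebraMap_counit (Coalgebra.Repr.arbitrary k h)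
    rw [Algebra.algebraMap_eq_smul_one] at this ⊢
    rw [MulOpposite.unop_smul, MulOpposite.unop_one, map_smul, hSone, ← this]
    simp [hSm, hS1', S]
  rw [← hT] at hM hcoactD hactD' ⊢
  exact ⟨GYDAux.main T S T α β hα hβ hconv hS2' (fun h => by rw [hS1', hS2']) hSone hSm hSc
      hTm hTc hTe hTα hTβ M actM coactM hM actD coactD hactD hcoactD,
    GYDAux.main T T S α β hα hβ hconv hS1' (fun h => rfl) hTone hTm hTc
      hSm hSc hSe hSα hSβ M actM coactM hM actD' coactD' hactD' hcoactD'⟩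

end
end

section
/- Let M be a finite-dimensional (α,β)-Yetter-Drinfeld module. Then End(M), with multiplication given by composition, left H-action (h·u)(m) = α⁻¹(h₁)·u(α⁻¹(S(h₂))·m), and right H-coaction determined by u₍₀₎(m) ⊗ u₍₁₎ = u(m₍₀₎)₍₀₎ ⊗ S⁻¹(m₍₁₎) u(m₍₀₎)₍₁₎, is an algebra in _H𝒴𝒟^H. -/
open TensorProduct

noncomputable section

namespace GYDAux

open Coalgebra WithConv

section tens
variable {k X Y Z : Type} [Field k] [AddCommGroup X] [Module k X] [AddCommGroup Y] [Module k Y]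
  [AddCommGroup Z] [Module k Z]

/-- Every tensor is a finite sum of pure tensors indexed by naturals. -/
lemma exists_rep (t : X ⊗[k] Y) :
    ∃ (n : ℕ) (a : ℕ → X) (b : ℕ → Y), t = ∑ i ∈ Finset.range n, a i ⊗ₜ[k] b i := by
  induction t with
  | zero => exact ⟨0, 0, 0, by simp⟩
  | tmul x y => exact ⟨1, fun _ => x, fun _ => y, by simp⟩
  | add s t hs ht =>
    obtain ⟨n, a, b, rfl⟩ := hs
    obtain ⟨m, c, d, rfl⟩ := ht
    refine ⟨n + m, fun i => if i < n then a i else c (i - n),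
      fun i => if i < n then b i else d (i - n), ?_⟩
    rw [Finset.sum_range_add]
    congr 1
    · refine Finset.sum_congr rfl fun i hi => ?_
      simp [Finset.mem_range.mp hi]
    · refine Finset.sum_congr rfl fun i hi => ?_
      simp

lemma exists_rep3 (t : (X ⊗[k] Y) ⊗[k] Z) :
    ∃ (n : ℕ) (a : ℕ → X) (b : ℕ → Y) (c : ℕ → Z),
      t = ∑ i ∈ Finset.range n, (a i ⊗ₜ[k] b i) ⊗ₜ[k] c i := by
  induction t with
  | zero => exact ⟨0, 0, 0, 0, by simp⟩
  | tmul x y =>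
    obtain ⟨n, a, b, rfl⟩ := exists_rep x
    exact ⟨n, a, b, fun _ => y, by simp [TensorProduct.sum_tmul]⟩
  | add s t hs ht =>
    obtain ⟨n, a, b, e, rfl⟩ := hs
    obtain ⟨m, c, d, f, rfl⟩ := ht
    refine ⟨n + m, fun i => if i < n then a i else c (i - n),
      fun i => if i < n then b i else d (i - n), fun i => if i < n then e i else f (i - n), ?_⟩
    rw [Finset.sum_range_add]
    congr 1
    · refine Finset.sum_congr rfl fun i hi => ?_
      simp [Finset.mem_range.mp hi]
    · refine Finset.sum_congr rfl fun i hi => ?_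
      simp
end tens

section conv
variable {k H E : Type} [Field k] [Ring H] [HopfAlgebra k H] [Ring E] [Algebra k E]

lemma conv_sum (f g : WithConv (H →ₗ[k] E)) {h : H} {s : Finset ℕ} {p q : ℕ → H}
    (hh : comul (R := k) h = ∑ i ∈ s, p i ⊗ₜ[k] q i) :
    (f * g) h = ∑ i ∈ s, f (p i) * g (q i) := by
  simp [hh]

lemma conv3_sum (f g l : WithConv (H →ₗ[k] E)) {h : H} {s : Finset ℕ} {a b c : ℕ → H}
    (hh : LinearMap.rTensor H (comul (R := k)) (comul (R := k) h)
        = ∑ i ∈ s, (a i ⊗ₜ[k] b i) ⊗ₜ[k] c i) :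
    (f * g * l) h = ∑ i ∈ s, f (a i) * g (b i) * l (c i) := by
  have key : ∀ t : H ⊗[k] H, LinearMap.mul' k E (TensorProduct.map (f * g).ofConv l.ofConv t) =
      LinearMap.mul' k E (TensorProduct.map (LinearMap.mul' k E ∘ₗ
        TensorProduct.map f.ofConv g.ofConv) l.ofConv (LinearMap.rTensor H (comul (R := k)) t)) := by
    intro t
    induction t with
    | zero => simp
    | tmul x y => simp
    | add x y hx hy => simp only [map_add, hx, hy]
  rw [LinearMap.convMul_apply, key, hh]
  simp

/-- Constant elements of the convolution algebra. -/
def cst (x : E) : WithConv (H →ₗ[k] E) :=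
  toConv ((LinearMap.toSpanSingleton k E x) ∘ₗ counit)

lemma cst_mul_apply (x : E) (f : WithConv (H →ₗ[k] E)) (h : H) :
    ((cst x : WithConv (H →ₗ[k] E)) * f) h = x * f h := by
  obtain ⟨n, a, b, hh⟩ := exists_rep (comul (R := k) h)
  rw [conv_sum _ _ hh]
  have := congrArg (fun t => x * f.ofConv (TensorProduct.lid k H t)) (rTensor_counit_comul (R := k) h)
  simp only [hh] at this
  simpa [cst, Finset.mul_sum] using this

lemma mul_cst_apply (x : E) (f : WithConv (H →ₗ[k] E)) (h : H) :
    (f * (cst x : WithConv (H →ₗ[k] E))) h = f h * x := by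
  obtain ⟨n, a, b, hh⟩ := exists_rep (comul (R := k) h)
  rw [conv_sum _ _ hh]
  have := congrArg (fun t => f.ofConv (TensorProduct.rid k H t) * x) (lTensor_counit_comul (R := k) h)
  simp only [hh] at this
  simpa [cst, Finset.sum_mul] using this

lemma cst_mul_cst (x y : E) : (cst x * cst y : WithConv (H →ₗ[k] E)) = cst (x * y) := by
  ext h
  rw [cst_mul_apply]
  simp [cst]

lemma cst_one : (cst 1 : WithConv (H →ₗ[k] E)) = 1 := by
  ext h
  simp [cst, Algebra.algebraMap_eq_smul_one]

/-- The purely algebraic heart of the compatibility condition. -/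
lemma key_alg {C : Type} [Ring C] (a ai P PS R R' U W b : C)
    (h1 : ai * a = 1) (h2 : P * PS = 1) (h3 : PS * P = 1)
    (h4 : R * R' = 1) (h5 : R' * R = 1) (h6 : a * R * P = P * R * b) (h7 : U * b = b * U)
    (hW : W = R * U * R') :
    R * (P * U * PS) * R' = ai * (P * W * PS) * a := by
  have h8 : PS * a * R = R * b * PS := by
    calc PS * a * R = PS * (a * R * P) * PS := by simp only [mul_assoc, h2, mul_one]
      _ = (PS * P) * R * b * PS := by rw [h6]; simp only [mul_assoc]
      _ = R * b * PS := by rw [h3, one_mul]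
  subst hW
  symm
  calc ai * (P * (R * U * R') * PS) * a
      = ai * P * R * U * R' * (PS * a * R) * R' := by
        simp only [mul_assoc, h4, mul_one]
    _ = ai * P * R * U * R' * (R * b * PS) * R' := by rw [h8]
    _ = ai * P * R * U * (R' * R) * b * PS * R' := by simp only [mul_assoc]
    _ = ai * P * R * (U * b) * PS * R' := by simp only [h5, mul_one, mul_assoc]
    _ = ai * (P * R * b) * U * PS * R' := by rw [h7]; simp only [mul_assoc]
    _ = (ai * a) * R * P * U * PS * R' := by rw [← h6]; simp only [mul_assoc]
    _ = R * (P * U * PS) * R' := by rw [h1, one_mul]; simp only [mul_assoc]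

end conv

section coaction
variable {k H M : Type} [Field k] [Ring H] [HopfAlgebra k H] [AddCommGroup M] [Module k M]

/-- The map `m ⊗ x ↦ m₀ ⊗ x σ(m₁)`. -/
def tw (coact : M →ₗ[k] M ⊗[k] H) (σ : H →ₗ[k] H) : Module.End k (M ⊗[k] H) :=
  LinearMap.lTensor M (TensorProduct.lift ((LinearMap.mul k H).flip ∘ₗ σ)) ∘ₗ
    (TensorProduct.assoc k M H H).toLinearMap ∘ₗ LinearMap.rTensor H coact

lemma tw_tmul (coact : M →ₗ[k] M ⊗[k] H) (σ : H →ₗ[k] H) (m : M) (x : H) :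
    tw coact σ (m ⊗ₜ x) = LinearMap.lTensor M (LinearMap.mulLeft k x ∘ₗ σ) (coact m) := by
  simp only [tw, LinearMap.comp_apply, LinearMap.rTensor_tmul]
  generalize coact m = t
  induction t with
  | zero => simp
  | tmul m y => simp
  | add s t hs ht => simp only [TensorProduct.add_tmul, map_add, hs, ht]

lemma tw_sum (coact : M →ₗ[k] M ⊗[k] H) (σ : H →ₗ[k] H) {m : M} (x : H)
    {t : Finset ℕ} {m₀ : ℕ → M} {m₁ : ℕ → H} (h : coact m = ∑ j ∈ t, m₀ j ⊗ₜ[k] m₁ j) :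
    tw coact σ (m ⊗ₜ x) = ∑ j ∈ t, m₀ j ⊗ₜ[k] (x * σ (m₁ j)) := by
  rw [tw_tmul, h]; simp

lemma tw_mul_tw (coact : M →ₗ[k] M ⊗[k] H)
    (hc : ∀ m : M, LinearMap.rTensor H coact (coact m)
      = (TensorProduct.assoc k M H H).symm
          (LinearMap.lTensor M (Coalgebra.comul (R := k)) (coact m)))
    (hu : ∀ m : M,
      TensorProduct.rid k M (LinearMap.lTensor M (Coalgebra.counit (R := k)) (coact m)) = m)
    (σ τ : H →ₗ[k] H)
    (hστ : ∀ h : H, TensorProduct.lift ((LinearMap.mul k H).flip.compl₁₂ σ τ) (comul (R := k) h)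
      = algebraMap k H (counit (R := k) h)) :
    tw coact σ * tw coact τ = 1 := by
  refine TensorProduct.ext' fun m x => ?_
  -- the map `(m ⊗ a) ⊗ b ↦ m ⊗ x τ(b) σ(a)`
  let F : (M ⊗[k] H) ⊗[k] H →ₗ[k] M ⊗[k] H :=
    LinearMap.lTensor M (LinearMap.mulLeft k x ∘ₗ
      TensorProduct.lift ((LinearMap.mul k H).flip.compl₁₂ σ τ)) ∘ₗ
      (TensorProduct.assoc k M H H).toLinearMap
  have h1 : ∀ t : M ⊗[k] H, tw coact σ (LinearMap.lTensor M (LinearMap.mulLeft k x ∘ₗ τ) t)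
      = F (LinearMap.rTensor H coact t) := by
    intro t
    induction t with
    | zero => simp
    | tmul m y =>
      simp only [LinearMap.lTensor_tmul, tw_tmul, LinearMap.rTensor_tmul]
      generalize coact m = t
      induction t with
      | zero => simp
      | tmul m z => simp [F]
      | add s t hs ht => simp only [TensorProduct.add_tmul, map_add, hs, ht]
    | add s t hs ht => simp only [map_add, hs, ht]
  have h2 : ∀ t : M ⊗[k] H, F ((TensorProduct.assoc k M H H).symm
      (LinearMap.lTensor M (Coalgebra.comul (R := k)) t)) =
      (TensorProduct.rid k M (LinearMap.lTensor M (Coalgebra.counit (R := k)) t)) ⊗ₜ x := by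
    intro t
    induction t with
    | zero => simp
    | tmul m y =>
      simp only [F, LinearMap.lTensor_tmul, LinearMap.comp_apply, LinearEquiv.coe_coe,
        LinearEquiv.apply_symm_apply, hστ]
      simp [Algebra.algebraMap_eq_smul_one, TensorProduct.smul_tmul]
    | add s t hs ht => simp only [TensorProduct.add_tmul, map_add, hs, ht]
  rw [Module.End.mul_apply, tw_tmul, h1, hc, h2, hu, Module.End.one_apply]

/-- The embedding `u ⊗ x ↦ (m ⊗ y ↦ u m ⊗ y x)`. -/
def Psi : (Module.End k M) ⊗[k] H →ₗ[k] Module.End k (M ⊗[k] H) :=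
  TensorProduct.lift ((TensorProduct.mapBilinear (RingHom.id k) M H M H).compl₂
    (LinearMap.mul k H).flip)

@[simp] lemma Psi_tmul (u : Module.End k M) (x : H) :
    Psi (u ⊗ₜ[k] x) = TensorProduct.map u (LinearMap.mulRight k x) := by
  ext; simp [Psi]

lemma Psi_apply_one (w : (Module.End k M) ⊗[k] H) (m : M) :
    Psi w (m ⊗ₜ 1) = LinearMap.rTensor H (LinearMap.applyₗ (R := k) m) w := by
  induction w with
  | zero => simp
  | tmul u x => simp
  | add s t hs ht => simp only [map_add, LinearMap.add_apply, hs, ht]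

lemma Psi_apply (w : (Module.End k M) ⊗[k] H) (m : M) (x : H) :
    Psi w (m ⊗ₜ x) = LinearMap.lTensor M (LinearMap.mulLeft k x) (Psi w (m ⊗ₜ 1)) := by
  induction w with
  | zero => simp
  | tmul u x => simp
  | add s t hs ht => simp only [map_add, LinearMap.add_apply, hs, ht]

lemma eval_inj {Q : Type} [AddCommGroup Q] [Module k Q] [FiniteDimensional k M]
    (w w' : (Module.End k M) ⊗[k] Q)
    (h : ∀ m : M, LinearMap.rTensor Q (LinearMap.applyₗ (R := k) m) w
      = LinearMap.rTensor Q (LinearMap.applyₗ (R := k) m) w') : w = w' := by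
  apply (rTensorHomEquivHomRTensor k M M Q).injective
  ext m
  have : ∀ w : (Module.End k M) ⊗[k] Q, rTensorHomEquivHomRTensor k M M Q w m =
      LinearMap.rTensor Q (LinearMap.applyₗ (R := k) m) w := by
    intro w
    rw [rTensorHomEquivHomRTensor_apply]
    induction w with
    | zero => simp
    | tmul u x => simp
    | add s t hs ht => simp only [map_add, LinearMap.add_apply, hs, ht]
  rw [this, this, h]

lemma Psi_inj [FiniteDimensional k M] {w w' : (Module.End k M) ⊗[k] H}
    (h : (Psi w : Module.End k (M ⊗[k] H)) = Psi w') : w = w' := by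
  apply eval_inj
  intro m
  rw [← Psi_apply_one, h, Psi_apply_one]

lemma Psi_coact (Sinv : H →ₗ[k] H) (coactM : M →ₗ[k] M ⊗[k] H)
    (coactE : Module.End k M →ₗ[k] Module.End k M ⊗[k] H)
    (hcoactE : GYD.EndCoactChar k H Sinv coactM coactE) (u : Module.End k M) :
    (Psi (coactE u) : Module.End k (M ⊗[k] H)) =
      tw coactM LinearMap.id * LinearMap.rTensor H u * tw coactM Sinv := by
  refine TensorProduct.ext' fun m x => ?_
  obtain ⟨n, m₀, m₁, hm⟩ := exists_rep (coactM m)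
  choose r n₀ n₁ hr using fun j => exists_rep (coactM (u (m₀ j)))
  rw [Psi_apply, Psi_apply_one,
    hcoactE u m _ m₀ m₁ (fun j => Finset.range (r j)) n₀ n₁ hm (fun j _ => hr j)]
  simp only [Module.End.mul_apply]
  rw [tw_sum _ _ _ hm]
  simp only [map_sum, LinearMap.rTensor_tmul, LinearMap.lTensor_tmul]
  refine Finset.sum_congr rfl fun j _ => ?_
  rw [tw_sum _ _ _ (hr j)]
  simp [mul_assoc]

end coaction

section sinv
variable {k H : Type} [Field k] [Ring H] [HopfAlgebra k H]

lemma exists_linear (Sinv : H → H) (hS : GYD.IsAntipodeInv k H Sinv) :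
    ∃ T : H →ₗ[k] H, ⇑T = Sinv := by
  have hinj : Function.Injective (HopfAlgebra.antipode k (A := H)) :=
    Function.LeftInverse.injective hS.2
  refine ⟨{ toFun := Sinv, map_add' := ?_, map_smul' := ?_ }, rfl⟩
  · intro x y; apply hinj; simp only [map_add, hS.1]
  · intro c x; apply hinj; simp only [map_smul, hS.1, RingHom.id_apply]

lemma antipode_algebraMap (c : k) :
    HopfAlgebra.antipode k (algebraMap k H c) = algebraMap k H c := by
  simp [Algebra.algebraMap_eq_smul_one]

lemma sum_anti_left {h : H} {s : Finset ℕ} {p q : ℕ → H}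
    (hh : comul (R := k) h = ∑ i ∈ s, p i ⊗ₜ[k] q i) :
    ∑ i ∈ s, HopfAlgebra.antipode k (p i) * q i = algebraMap k H (counit (R := k) h) := by
  rw [← HopfAlgebra.mul_antipode_rTensor_comul_apply (R := k) h, hh]; simp

lemma sum_anti_right {h : H} {s : Finset ℕ} {p q : ℕ → H}
    (hh : comul (R := k) h = ∑ i ∈ s, p i ⊗ₜ[k] q i) :
    ∑ i ∈ s, p i * HopfAlgebra.antipode k (q i) = algebraMap k H (counit (R := k) h) := by
  rw [← HopfAlgebra.mul_antipode_lTensor_comul_apply (R := k) h, hh]; simp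

lemma sum_sinv_left {T : H →ₗ[k] H} (hS : GYD.IsAntipodeInv k H T) {h : H} {s : Finset ℕ}
    {p q : ℕ → H} (hh : comul (R := k) h = ∑ i ∈ s, p i ⊗ₜ[k] q i) :
    ∑ i ∈ s, T (q i) * p i = algebraMap k H (counit (R := k) h) := by
  apply Function.LeftInverse.injective hS.2
  rw [antipode_algebraMap, ← sum_anti_left hh]
  simp [HopfAlgebra.antipode_mul_antidistrib, hS.1]

lemma sum_sinv_right {T : H →ₗ[k] H} (hS : GYD.IsAntipodeInv k H T) {h : H} {s : Finset ℕ}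
    {p q : ℕ → H} (hh : comul (R := k) h = ∑ i ∈ s, p i ⊗ₜ[k] q i) :
    ∑ i ∈ s, q i * T (p i) = algebraMap k H (counit (R := k) h) := by
  apply Function.LeftInverse.injective hS.2
  rw [antipode_algebraMap, ← sum_anti_right hh]
  simp [HopfAlgebra.antipode_mul_antidistrib, hS.1]

end sinv

section coassoc
variable {k H M : Type} [Field k] [Ring H] [HopfAlgebra k H] [AddCommGroup M] [Module k M]

/-- `m ⊗ x ↦ (m ⊗ x₁) ⊗ x₂`. -/
def DD : M ⊗[k] H →ₗ[k] (M ⊗[k] H) ⊗[k] H :=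
  (TensorProduct.assoc k M H H).symm.toLinearMap ∘ₗ LinearMap.lTensor M (comul (R := k))

/-- exchange of the last two factors -/
def sw : Module.End k ((M ⊗[k] H) ⊗[k] H) := (TensorProduct.rightComm k M H H).toLinearMap

@[simp] lemma sw_tmul (m : M) (x y : H) :
    sw ((m ⊗ₜ[k] x) ⊗ₜ[k] y) = (m ⊗ₜ[k] y) ⊗ₜ[k] x := by simp [sw]

lemma sw_sw (t : (M ⊗[k] H) ⊗[k] H) : sw (sw t) = t := by
  obtain ⟨n, a, b, c, rfl⟩ := exists_rep3 t
  simp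

lemma DD_sum (m : M) {x : H} {s : Finset ℕ} {p q : ℕ → H}
    (hh : comul (R := k) x = ∑ i ∈ s, p i ⊗ₜ[k] q i) :
    DD (m ⊗ₜ[k] x) = ∑ i ∈ s, (m ⊗ₜ[k] p i) ⊗ₜ[k] q i := by
  simp [DD, hh, TensorProduct.tmul_sum]

lemma DD_tw (coact : M →ₗ[k] M ⊗[k] H)
    (hc : ∀ m : M, LinearMap.rTensor H coact (coact m)
      = (TensorProduct.assoc k M H H).symm
          (LinearMap.lTensor M (Coalgebra.comul (R := k)) (coact m))) (t : M ⊗[k] H) :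
    DD (tw coact LinearMap.id t) = LinearMap.rTensor H (tw coact LinearMap.id)
      (sw (LinearMap.rTensor H (tw coact LinearMap.id) (sw (DD t)))) := by
  induction t with
  | zero => simp
  | add s t hs ht => simp only [map_add, hs, ht]
  | tmul m x =>
    obtain ⟨n, p, q, hx⟩ := exists_rep (comul (R := k) x)
    let G : (M ⊗[k] H) ⊗[k] H →ₗ[k] (M ⊗[k] H) ⊗[k] H :=
      ∑ i ∈ Finset.range n, TensorProduct.map (LinearMap.lTensor M (LinearMap.mulLeft k (p i)))
        (LinearMap.mulLeft k (q i))
    have h1 : ∀ t : M ⊗[k] H, DD (LinearMap.lTensor M (LinearMap.mulLeft k x ∘ₗ LinearMap.id) t)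
        = G ((TensorProduct.assoc k M H H).symm
          (LinearMap.lTensor M (Coalgebra.comul (R := k)) t)) := by
      intro t
      induction t with
      | zero => simp
      | add s t hs ht => simp only [map_add, hs, ht]
      | tmul m y =>
        obtain ⟨n', p', q', hy⟩ := exists_rep (comul (R := k) y)
        simp [DD, hx, hy, G, Finset.sum_mul_sum, TensorProduct.tmul_sum]
        try rw [Finset.sum_comm]
    have h2 : ∀ t : M ⊗[k] H, ∀ i, LinearMap.rTensor H (tw coact LinearMap.id)
        (sw (LinearMap.lTensor M (LinearMap.mulLeft k (q i) ∘ₗ LinearMap.id) t ⊗ₜ[k] p i)) =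
        TensorProduct.map (LinearMap.lTensor M (LinearMap.mulLeft k (p i)))
        (LinearMap.mulLeft k (q i)) (LinearMap.rTensor H coact t) := by
      intro t i
      induction t with
      | zero => simp
      | add s t hs ht => simp only [TensorProduct.add_tmul, map_add, hs, ht]
      | tmul m y => simp [tw_tmul]
    rw [tw_tmul, h1, ← hc, DD_sum m hx]
    simp only [map_sum, sw_tmul, LinearMap.rTensor_tmul, tw_tmul, h2]
    simp [G]

lemma coassoc_end [FiniteDimensional k M] (T : H →ₗ[k] H) (coactM : M →ₗ[k] M ⊗[k] H)
    (hc : ∀ m : M, LinearMap.rTensor H coactM (coactM m)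
      = (TensorProduct.assoc k M H H).symm
          (LinearMap.lTensor M (Coalgebra.comul (R := k)) (coactM m)))
    (hR : tw coactM LinearMap.id * tw coactM T = 1)
    (hR' : tw coactM T * tw coactM LinearMap.id = 1)
    (coactE : Module.End k M →ₗ[k] Module.End k M ⊗[k] H)
    (hcE : ∀ u, (Psi (coactE u) : Module.End k (M ⊗[k] H)) =
      tw coactM LinearMap.id * LinearMap.rTensor H u * tw coactM T) (u : Module.End k M) :
    LinearMap.rTensor H coactE (coactE u)
      = (TensorProduct.assoc k _ H H).symm
          (LinearMap.lTensor _ (Coalgebra.comul (R := k)) (coactE u)) := by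
  set R : Module.End k (M ⊗[k] H) := tw coactM LinearMap.id with hRdef
  set R' : Module.End k (M ⊗[k] H) := tw coactM T with hRdef'
  have e1 : ∀ t, R (R' t) = t := fun t => by rw [← Module.End.mul_apply, hR]; rfl
  have e2 : ∀ t, R' (R t) = t := fun t => by rw [← Module.End.mul_apply, hR']; rfl
  have a2 : ∀ t, LinearMap.rTensor H R' (LinearMap.rTensor H R t) = t := fun t => by
    rw [← LinearMap.comp_apply, ← LinearMap.rTensor_comp]
    rw [← Module.End.mul_eq_comp, hR', Module.End.one_eq_id]; simp
  have hD : ∀ t, DD (R t) = LinearMap.rTensor H R (sw (LinearMap.rTensor H R (sw (DD t)))) :=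
    DD_tw coactM hc
  have hD' : ∀ t, DD (R' t) =
      sw (LinearMap.rTensor H R' (sw (LinearMap.rTensor H R' (DD t)))) := by
    intro t
    conv_rhs => rw [← e1 t, hD, a2, sw_sw, a2, sw_sw]
  have hA : ∀ (w : Module.End k M ⊗[k] H) (t : (M ⊗[k] H) ⊗[k] H),
      Psi (LinearMap.rTensor H Psi (LinearMap.rTensor H coactE w)) t =
      LinearMap.rTensor H R (sw (LinearMap.rTensor H (Psi w)
        (sw (LinearMap.rTensor H R' t)))) := by
    intro w t
    induction w with
    | zero => simp
    | add x y hx hy => simp only [map_add, LinearMap.add_apply, LinearMap.rTensor_add, hx, hy]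
    | tmul v x =>
      have hv : ∀ t, sw (LinearMap.rTensor H (Psi (v ⊗ₜ[k] x)) (sw t)) =
          TensorProduct.map (LinearMap.rTensor H v) (LinearMap.mulRight k x) t := by
        intro t
        obtain ⟨n, a, b, c, rfl⟩ := exists_rep3 t
        simp
      rw [hv]
      simp only [LinearMap.rTensor_tmul, Psi_tmul, hcE]
      induction t with
      | zero => simp
      | add x y hx hy => simp only [map_add, hx, hy]
      | tmul y z => simp
  have hB : ∀ (w : Module.End k M ⊗[k] H) (t : M ⊗[k] H),
      Psi (LinearMap.rTensor H Psi ((TensorProduct.assoc k _ H H).symm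
          (LinearMap.lTensor _ (Coalgebra.comul (R := k)) w))) (DD t) = DD (Psi w t) := by
    intro w t
    induction w with
    | zero => simp
    | add x y hx hy => simp only [map_add, LinearMap.add_apply, hx, hy]
    | tmul v x =>
      induction t with
      | zero => simp
      | add x y hx hy => simp only [map_add, hx, hy]
      | tmul m y =>
        obtain ⟨n, p, q, hx⟩ := exists_rep (comul (R := k) x)
        obtain ⟨n', p', q', hy⟩ := exists_rep (comul (R := k) y)
        simp [DD, hx, hy, Finset.sum_mul_sum, TensorProduct.tmul_sum]
        try rw [Finset.sum_comm]
  have hU : ∀ t : M ⊗[k] H, DD (LinearMap.rTensor H u t) =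
      sw (LinearMap.rTensor H (LinearMap.rTensor H u) (sw (DD t))) := by
    intro t
    induction t with
    | zero => simp
    | add x y hx hy => simp only [map_add, hx, hy]
    | tmul m y =>
      obtain ⟨n', p', q', hy⟩ := exists_rep (comul (R := k) y)
      rw [LinearMap.rTensor_tmul, DD_sum _ hy, DD_sum _ hy]
      simp
  have main : ∀ t : M ⊗[k] H, Psi (LinearMap.rTensor H Psi
      (LinearMap.rTensor H coactE (coactE u))) (DD t) =
      Psi (LinearMap.rTensor H Psi ((TensorProduct.assoc k _ H H).symm
          (LinearMap.lTensor _ (Coalgebra.comul (R := k)) (coactE u)))) (DD t) := by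
    intro t
    rw [hB, hA, hcE]
    simp only [Module.End.mul_apply, hD, hU, hD', sw_sw]
    simp only [Module.End.mul_eq_comp, LinearMap.rTensor_comp, LinearMap.comp_apply]
  have hfin : ∀ (z : (Module.End k M ⊗[k] H) ⊗[k] H) (m : M),
      LinearMap.rTensor (H ⊗[k] H) (LinearMap.applyₗ (R := k) m)
        (TensorProduct.assoc k _ H H z) =
      TensorProduct.assoc k M H H (Psi (LinearMap.rTensor H Psi z) (DD (m ⊗ₜ[k] (1 : H)))) := by
    intro z m
    obtain ⟨n, a, b, c, rfl⟩ := exists_rep3 z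
    simp [DD, Algebra.TensorProduct.one_def]
  apply (TensorProduct.assoc k _ H H).injective
  apply eval_inj
  intro m
  rw [hfin, hfin, main]

end coassoc

section final
variable {k H M : Type} [Field k] [Ring H] [HopfAlgebra k H] [AddCommGroup M] [Module k M]

lemma Psi_mul (u v : Module.End k M) (x y : H) :
    (Psi (u ⊗ₜ[k] x) * Psi (v ⊗ₜ[k] y) : Module.End k (M ⊗[k] H))
      = Psi ((u * v) ⊗ₜ[k] (y * x)) := by
  refine TensorProduct.ext' fun m z => ?_
  simp [mul_assoc]

lemma Psi_one : (Psi ((1 : Module.End k M) ⊗ₜ[k] (1 : H)) : Module.End k (M ⊗[k] H)) = 1 := by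
  refine TensorProduct.ext' fun m z => ?_
  simp

lemma Psi_rTensor (u : Module.End k M) :
    (LinearMap.rTensor H u : Module.End k (M ⊗[k] H)) = Psi (u ⊗ₜ[k] (1 : H)) := by
  refine TensorProduct.ext' fun m z => ?_
  simp

/-- right multiplication operators -/
def rm : H →ₗ[k] Module.End k (M ⊗[k] H) := Psi ∘ₗ TensorProduct.mk k (Module.End k M) H 1

/-- operators on the first factor -/
def lm : Module.End k M →ₗ[k] Module.End k (M ⊗[k] H) :=
  Psi ∘ₗ (TensorProduct.mk k (Module.End k M) H).flip 1

lemma rm_apply (x : H) : (rm x : Module.End k (M ⊗[k] H)) = Psi ((1 : Module.End k M) ⊗ₜ[k] x) :=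
  rfl

lemma lm_apply (u : Module.End k M) :
    (lm u : Module.End k (M ⊗[k] H)) = Psi (u ⊗ₜ[k] (1 : H)) := rfl

lemma rm_mul (x y : H) : (rm x * rm y : Module.End k (M ⊗[k] H)) = rm (y * x) := by
  simp only [rm_apply, Psi_mul, one_mul]

lemma lm_mul (u v : Module.End k M) :
    (lm u * lm v : Module.End k (M ⊗[k] H)) = lm (u * v) := by
  simp only [lm_apply, Psi_mul, one_mul]

lemma rm_algebraMap (c : k) : (rm (algebraMap k H c) : Module.End k (M ⊗[k] H)) =
    algebraMap k _ c := by
  rw [Algebra.algebraMap_eq_smul_one, Algebra.algebraMap_eq_smul_one, map_smul, rm_apply, Psi_one]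

lemma lm_algebraMap (c : k) : (lm (algebraMap k (Module.End k M) c) :
    Module.End k (M ⊗[k] H)) = algebraMap k _ c := by
  rw [Algebra.algebraMap_eq_smul_one, Algebra.algebraMap_eq_smul_one, map_smul, lm_apply, Psi_one]

lemma lm_rm (u : Module.End k M) (x : H) :
    (lm u * rm x : Module.End k (M ⊗[k] H)) = rm x * lm u := by
  simp only [rm_apply, lm_apply, Psi_mul, one_mul, mul_one]

lemma conv_eq_one {E : Type} [Ring E] [Algebra k E] (f g : WithConv (H →ₗ[k] E))
    (h : ∀ (x : H) (n : ℕ) (p q : ℕ → H),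
      comul (R := k) x = ∑ i ∈ Finset.range n, p i ⊗ₜ[k] q i →
      ∑ i ∈ Finset.range n, f (p i) * g (q i) = algebraMap k E (counit (R := k) x)) :
    f * g = 1 := by
  ext x
  obtain ⟨n, p, q, hx⟩ := exists_rep (comul (R := k) x)
  rw [conv_sum _ _ hx, h x n p q hx]
  rfl

end final

end GYDAux

open GYDAux Coalgebra WithConv in
theorem statement_7
    (k H : Type) [Field k] [Ring H] [HopfAlgebra k H]
    (Sinv : H → H) (hS : GYD.IsAntipodeInv k H Sinv)
    (α β : H ≃ₗ[k] H)
    (hα : GYD.IsHopfAut k H α) (hβ : GYD.IsHopfAut k H β)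
    (M : Type) [AddCommGroup M] [Module k M] [FiniteDimensional k M]
    (actM : H →ₗ[k] M →ₗ[k] M) (coactM : M →ₗ[k] M ⊗[k] H)
    (hM : GYD.IsYD k H Sinv ⇑α ⇑β actM coactM)
    (actE : H →ₗ[k] Module.End k M →ₗ[k] Module.End k M)
    (coactE : Module.End k M →ₗ[k] Module.End k M ⊗[k] H)
    (hactE : GYD.EndActChar k H ⇑α.symm actM actE)
    (hcoactE : GYD.EndCoactChar k H Sinv coactM coactE) :
    GYD.IsYDAlgebra k H Sinv actE coactE := by
  classical
  obtain ⟨T, rfl⟩ := GYDAux.exists_linear Sinv hS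
  obtain ⟨hM1, hMmul, hMc, hMu, hMYD⟩ := hM
  obtain ⟨hαm, hα1, hαΔ, hαε⟩ := hα
  -- the coaction as a conjugation
  set R : Module.End k (M ⊗[k] H) := tw coactM LinearMap.id with hRdef
  set R' : Module.End k (M ⊗[k] H) := tw coactM T with hRdef'
  have hRR' : R * R' = 1 := by
    apply tw_mul_tw coactM hMc hMu
    intro h
    obtain ⟨n, p, q, hh⟩ := exists_rep (comul (R := k) h)
    rw [← sum_sinv_left hS hh, hh]; simp
  have hR'R : R' * R = 1 := by
    apply tw_mul_tw coactM hMc hMu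
    intro h
    obtain ⟨n, p, q, hh⟩ := exists_rep (comul (R := k) h)
    rw [← sum_sinv_right hS hh, hh]; simp
  have hcE : ∀ u, (Psi (coactE u) : Module.End k (M ⊗[k] H)) =
      R * LinearMap.rTensor H u * R' := Psi_coact T coactM coactE hcoactE
  have hcE' : ∀ u, (Psi (coactE u) : Module.End k (M ⊗[k] H)) = R * lm u * R' := by
    intro u; rw [hcE, Psi_rTensor, lm_apply]
  -- facts on the inverse of `α`
  have hα'm : ∀ x y, α.symm (x * y) = α.symm x * α.symm y := fun x y => by
    apply α.injective; simp [hαm]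
  have hα'1 : α.symm 1 = 1 := by apply α.injective; simp [hα1]
  -- the action on `M` twisted by the inverse of `α`
  let π : H →ₗ[k] Module.End k M := actM ∘ₗ α.symm.toLinearMap
  have hπ1 : π 1 = 1 := by ext m; simp [π, hα'1, hM1]
  have hπm : ∀ x y, π (x * y) = π x * π y := fun x y => by ext m; simp [π, hα'm, hMmul]
  have hπa : ∀ c : k, π (algebraMap k H c) = algebraMap k _ c := fun c => by
    rw [Algebra.algebraMap_eq_smul_one, Algebra.algebraMap_eq_smul_one, map_smul, hπ1]
  let p₀ : WithConv (H →ₗ[k] Module.End k M) := toConv π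
  let ps₀ : WithConv (H →ₗ[k] Module.End k M) := toConv (π ∘ₗ HopfAlgebra.antipode k)
  have hact_sum : ∀ (h : H) (u : Module.End k M) (s : Finset ℕ) (p q : ℕ → H),
      comul (R := k) h = ∑ i ∈ s, p i ⊗ₜ[k] q i →
      actE h u = ∑ i ∈ s, π (p i) * u * π (HopfAlgebra.antipode k (q i)) := by
    intro h u s p q hh
    ext m
    rw [hactE h u m s p q hh]
    simp [π]
  have hact : ∀ (h : H) (u : Module.End k M), actE h u = (p₀ * cst u * ps₀).ofConv h := by
    intro h u
    obtain ⟨n, p, q, hh⟩ := exists_rep (comul (R := k) h)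
    rw [conv_sum _ _ hh, hact_sum h u _ p q hh]
    simp only [mul_cst_apply]
    rfl
  have hpps : p₀ * ps₀ = 1 := by
    apply conv_eq_one
    intro x n p q hx
    rw [← hπa, ← sum_anti_right hx, map_sum]
    simp only [hπm]; rfl
  have hpsp : ps₀ * p₀ = 1 := by
    apply conv_eq_one
    intro x n p q hx
    rw [← hπa, ← sum_anti_left hx, map_sum]
    simp only [hπm]; rfl
  -- the same on `M ⊗ H`
  let P : WithConv (H →ₗ[k] Module.End k (M ⊗[k] H)) := toConv (lm ∘ₗ π)
  let PS : WithConv (H →ₗ[k] Module.End k (M ⊗[k] H)) :=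
    toConv (lm ∘ₗ π ∘ₗ HopfAlgebra.antipode k)
  let a : WithConv (H →ₗ[k] Module.End k (M ⊗[k] H)) := toConv rm
  let ai : WithConv (H →ₗ[k] Module.End k (M ⊗[k] H)) := toConv (rm ∘ₗ T)
  let ai' : WithConv (H →ₗ[k] Module.End k (M ⊗[k] H)) :=
    toConv (rm ∘ₗ α.toLinearMap ∘ₗ T ∘ₗ α.symm.toLinearMap)
  let b : WithConv (H →ₗ[k] Module.End k (M ⊗[k] H)) :=
    toConv (rm ∘ₗ β.toLinearMap ∘ₗ α.symm.toLinearMap)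
  have hPPS : P * PS = 1 := by
    apply conv_eq_one
    intro x n p q hx
    rw [← lm_algebraMap, ← hπa, ← sum_anti_right hx, map_sum, map_sum]
    simp only [hπm, ← lm_mul]; rfl
  have hPSP : PS * P = 1 := by
    apply conv_eq_one
    intro x n p q hx
    rw [← lm_algebraMap, ← hπa, ← sum_anti_left hx, map_sum, map_sum]
    simp only [hπm, ← lm_mul]; rfl
  have haia : ai * a = 1 := by
    apply conv_eq_one
    intro x n p q hx
    rw [← rm_algebraMap, ← sum_sinv_right hS hx, map_sum]
    simp only [← rm_mul]; rfl
  have haai' : a * ai' = 1 := by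
    apply conv_eq_one
    intro x n p q hx
    obtain ⟨g, rfl⟩ := α.surjective x
    have hg : comul (R := k) g = ∑ i ∈ Finset.range n, α.symm (p i) ⊗ₜ[k] α.symm (q i) := by
      have := congrArg (TensorProduct.map α.symm.toLinearMap α.symm.toLinearMap)
        ((hαΔ g).symm.trans hx)
      rw [← LinearMap.comp_apply, ← TensorProduct.map_comp] at this
      simpa using this
    have h1 := congrArg α (sum_sinv_left hS hg)
    have h2 : α (algebraMap k H (counit (R := k) g)) = algebraMap k H (counit (R := k) (α g)) := by
      rw [hαε, Algebra.algebraMap_eq_smul_one, map_smul, hα1]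
    rw [h2, map_sum] at h1
    rw [← rm_algebraMap, ← h1, map_sum]
    refine Finset.sum_congr rfl fun i _ => ?_
    simp [a, ai', rm_mul, hαm]
  have hRP : cst R * P = ai' * P * (cst R * b) := by
    ext h : 2
    obtain ⟨g, rfl⟩ := α.surjective h
    obtain ⟨n, x, y, z, hg⟩ := exists_rep3
      (LinearMap.rTensor H (comul (R := k)) (comul (R := k) g))
    have hh : LinearMap.rTensor H (comul (R := k)) (comul (R := k) (α g)) =
        ∑ i ∈ Finset.range n, (α (x i) ⊗ₜ[k] α (y i)) ⊗ₜ[k] α (z i) := by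
      have e : ∀ t : H ⊗[k] H, LinearMap.rTensor H (comul (R := k))
          (TensorProduct.map α.toLinearMap α.toLinearMap t) =
          TensorProduct.map (TensorProduct.map α.toLinearMap α.toLinearMap) α.toLinearMap
            (LinearMap.rTensor H (comul (R := k)) t) := by
        intro t
        induction t with
        | zero => simp
        | tmul x y => simp [hαΔ]
        | add x y hx hy => simp only [map_add, hx, hy]
      rw [hαΔ, e, hg]
      simp
    rw [conv3_sum _ _ _ hh, cst_mul_apply]
    simp only [cst_mul_apply]
    refine TensorProduct.ext' fun m w => ?_
    obtain ⟨n', m₀, m₁, hm⟩ := exists_rep (coactM m)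
    have key := hMYD g m _ _ x y z m₀ m₁ hg hm
    simp only [Module.End.mul_apply, LinearMap.sum_apply]
    have hl : P (α g) (m ⊗ₜ w) = actM g m ⊗ₜ[k] w := by
      simp [P, lm_apply, π]
    rw [hl, hRdef, tw_tmul, key]
    simp only [map_sum]
    refine Finset.sum_congr rfl fun i _ => ?_
    have hb : b (α (z i)) (m ⊗ₜ w) = m ⊗ₜ[k] (w * β (z i)) := by
      simp [b, rm_apply]
    rw [hb, tw_sum _ _ _ hm]
    simp [P, ai', lm_apply, rm_apply, π, mul_assoc]
  have haRP : a * cst R * P = P * cst R * b := by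
    rw [mul_assoc, hRP, mul_assoc, ← mul_assoc a ai', haai', one_mul, mul_assoc]
  have hcR : (cst R * cst R' : WithConv (H →ₗ[k] Module.End k (M ⊗[k] H))) = 1 := by
    rw [cst_mul_cst, hRR', cst_one]
  have hcR' : (cst R' * cst R : WithConv (H →ₗ[k] Module.End k (M ⊗[k] H))) = 1 := by
    rw [cst_mul_cst, hR'R, cst_one]
  have hlact : ∀ h u, (lm (actE h u) : Module.End k (M ⊗[k] H)) = (P * cst (lm u) * PS).ofConv h := by
    intro h u
    obtain ⟨n, p, q, hh⟩ := exists_rep (comul (R := k) h)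
    rw [conv_sum _ _ hh, hact_sum h u _ p q hh, map_sum]
    simp only [mul_cst_apply, ← lm_mul]
    rfl
  have hPsiact : ∀ h w, (Psi (LinearMap.rTensor H (actE h) w) : Module.End k (M ⊗[k] H)) =
      (P * cst (Psi w) * PS).ofConv h := by
    intro h w
    obtain ⟨n, p, q, hh⟩ := exists_rep (comul (R := k) h)
    rw [conv_sum _ _ hh]
    simp only [mul_cst_apply]
    induction w with
    | zero => simp
    | add x y hx hy => simp only [map_add, hx, hy, mul_add, add_mul, Finset.sum_add_distrib]
    | tmul u x =>
      rw [LinearMap.rTensor_tmul, hact_sum h u _ p q hh, TensorProduct.sum_tmul, map_sum]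
      refine Finset.sum_congr rfl fun i _ => ?_
      simp only [P, PS, LinearMap.comp_apply, lm_apply, Psi_mul, mul_one, one_mul]
  refine ⟨⟨?_, ?_, ?_, ?_, ?_⟩, ?_, ?_, ?_, ?_⟩
  · intro u
    have h1 : comul (R := k) (1 : H) =
        ∑ i ∈ Finset.range 1, (fun _ => (1 : H)) i ⊗ₜ[k] (fun _ => (1 : H)) i := by
      simp [Algebra.TensorProduct.one_def]
    rw [hact_sum 1 u _ _ _ h1]
    simp [hπ1]
  · intro g h u
    let L : H ⊗[k] H →ₗ[k] Module.End k M := LinearMap.mul' k _ ∘ₗ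
      TensorProduct.map π (LinearMap.mulLeft k u ∘ₗ π ∘ₗ HopfAlgebra.antipode k)
    have hL : ∀ x, actE x u = L (comul (R := k) x) := by
      intro x
      obtain ⟨n, p, q, hh⟩ := exists_rep (comul (R := k) x)
      rw [hact_sum x u _ _ _ hh, hh]
      simp [L, mul_assoc]
    obtain ⟨n, p, q, hg⟩ := exists_rep (comul (R := k) g)
    obtain ⟨n', p', q', hh⟩ := exists_rep (comul (R := k) h)
    rw [hL, hact_sum g _ _ _ _ hg, hact_sum h _ _ _ _ hh, Bialgebra.comul_mul, hg, hh]
    simp only [map_sum, Finset.mul_sum, Finset.sum_mul]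
    try rw [Finset.sum_comm]
    refine Finset.sum_congr rfl fun i _ => Finset.sum_congr rfl fun j _ => ?_
    simp [L, mul_assoc, hπm, HopfAlgebra.antipode_mul_antidistrib]
  · exact coassoc_end T coactM hMc hRR' hR'R coactE hcE
  · intro u
    let e : M ⊗[k] H →ₗ[k] M := (TensorProduct.rid k M).toLinearMap ∘ₗ
      LinearMap.lTensor M (counit (R := k))
    have he : ∀ (w : Module.End k M ⊗[k] H) t, e (Psi w t) =
        (TensorProduct.rid k _ (LinearMap.lTensor _ (counit (R := k)) w)) (e t) := by
      intro w t
      induction w with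
      | zero => simp
      | add x y hx hy => simp only [map_add, LinearMap.add_apply, hx, hy]
      | tmul v x =>
        induction t with
        | zero => simp
        | add x y hx hy => simp only [map_add, hx, hy]
        | tmul m y => simp [e, smul_smul, mul_comm]
    have heR : ∀ t, e (R t) = e t := by
      intro t
      induction t with
      | zero => simp
      | add x y hx hy => simp only [map_add, hx, hy]
      | tmul m y =>
        obtain ⟨n, m₀, m₁, hm⟩ := exists_rep (coactM m)
        have := congrArg (fun z => counit (R := k) y • z) (hMu m)
        rw [hRdef, tw_sum _ _ _ hm]
        simp only [hm] at this
        simpa [e, Finset.smul_sum, smul_smul] using this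
    have heR' : ∀ t, e (R' t) = e t := by
      intro t
      rw [← heR, ← Module.End.mul_apply, hRR', Module.End.one_apply]
    have heU : ∀ t, e (LinearMap.rTensor H u t) = u (e t) := by
      intro t
      induction t with
      | zero => simp
      | add x y hx hy => simp only [map_add, hx, hy]
      | tmul m y => simp [e]
    ext m
    have h1 := he (coactE u) (m ⊗ₜ[k] (1 : H))
    have h2 : e (m ⊗ₜ[k] (1 : H)) = m := by simp [e]
    rw [hcE, Module.End.mul_apply, Module.End.mul_apply, heR, heU, heR', h2] at h1
    exact h1.symm
  · intro h u s t x y z u₀ u₁ hh hu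
    apply Psi_inj
    have hk := key_alg a ai P PS (cst R) (cst R') (cst (lm u)) (cst (Psi (coactE u))) b
      haia hPPS hPSP hcR hcR' haRP
      (by
        ext x : 2
        rw [cst_mul_apply, mul_cst_apply]
        exact lm_rm _ _)
      (by rw [cst_mul_cst, cst_mul_cst, hcE'])
    have hk' := congrArg (fun f => f.ofConv h) hk
    simp only [mul_cst_apply, cst_mul_apply] at hk'
    rw [← hlact, ← hcE', conv3_sum _ _ _ hh] at hk'
    rw [hk', map_sum]
    refine Finset.sum_congr rfl fun i _ => ?_
    rw [← hPsiact, hu]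
    simp only [map_sum, Finset.mul_sum, Finset.sum_mul]
    refine Finset.sum_congr rfl fun j _ => ?_
    simp only [a, ai, LinearMap.comp_apply, rm_apply, LinearMap.rTensor_tmul, Psi_mul, one_mul,
      mul_one, id_eq, mul_assoc]
  · intro h u v s p q hh
    have : p₀ * cst (u * v) * ps₀ = (p₀ * cst u * ps₀) * (p₀ * cst v * ps₀) := by
      calc p₀ * cst (u * v) * ps₀ = p₀ * (cst u * cst v) * ps₀ := by rw [cst_mul_cst]
        _ = p₀ * cst u * (ps₀ * p₀) * (cst v * ps₀) := by
          rw [hpsp, mul_one]; simp only [mul_assoc]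
        _ = _ := by simp only [mul_assoc]
    rw [hact, this, conv_sum _ _ hh]
    simp only [hact]
  · intro h
    rw [hact, cst_one, mul_one, hpps]
    simp [Algebra.algebraMap_eq_smul_one]
  · apply Psi_inj
    rw [hcE', Psi_one, lm_apply, Psi_one, mul_one, hRR']
  · intro u v s t u₀ u₁ v₀ v₁ hu hv
    apply Psi_inj
    have : (Psi (coactE (u * v)) : Module.End k (M ⊗[k] H)) =
        Psi (coactE u) * Psi (coactE v) := by
      rw [hcE', hcE', hcE', ← lm_mul]
      calc R * (lm u * lm v) * R' = R * lm u * 1 * lm v * R' := by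
            simp only [mul_assoc, one_mul]
        _ = _ := by rw [← hR'R]; simp only [mul_assoc]
    rw [this, hu, hv]
    simp only [map_sum, Finset.sum_mul_sum, Psi_mul]


end
end

section
/- Let M be a finite-dimensional (α,β)-Yetter-Drinfeld module. Then End(M)^op, the opposite algebra of End(M) (multiplication u•v = v∘u), with left H-action (h·u)(m) = β⁻¹(h₂)·u(β⁻¹(S⁻¹(h₁))·m) and right H-coaction determined by u₍₀₎(m) ⊗ u₍₁₎ = u(m₍₀₎)₍₀₎ ⊗ u(m₍₀₎)₍₁₎ S(m₍₁₎), is an algebra in _H𝒴𝒟^H. -/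
open TensorProduct

noncomputable section

namespace GYDaux

open Coalgebra WithConv

section generic
variable {k H : Type} [Field k] [Ring H] [HopfAlgebra k H]

lemma exists_rep {M N : Type} [AddCommGroup M] [Module k M] [AddCommGroup N] [Module k N]
    (x : M ⊗[k] N) : ∃ (s : Finset ℕ) (a : ℕ → M) (b : ℕ → N), x = ∑ i ∈ s, a i ⊗ₜ[k] b i := by
  obtain ⟨n, a, b, rfl⟩ := TensorProduct.exists_sum_tmul_eq x
  refine ⟨Finset.range n, fun i => if h : i < n then a ⟨i, h⟩ else 0,
    fun i => if h : i < n then b ⟨i, h⟩ else 0, ?_⟩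
  rw [Finset.sum_range]
  simp

/-- The linear version of the inverse antipode. -/
def SL (Sinv : H → H) (hS : GYD.IsAntipodeInv k H Sinv) : H →ₗ[k] H where
  toFun := Sinv
  map_add' x y := by
    have hi : Function.Injective (HopfAlgebra.antipode k (A := H)) :=
      Function.LeftInverse.injective hS.2
    apply hi; rw [map_add, hS.1, hS.1, hS.1]
  map_smul' c x := by
    have hi : Function.Injective (HopfAlgebra.antipode k (A := H)) :=
      Function.LeftInverse.injective hS.2
    apply hi; rw [RingHom.id_apply, map_smul, hS.1, hS.1]

variable {Sinv : H → H} (hS : GYD.IsAntipodeInv k H Sinv)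

lemma SL_apply (h : H) : SL Sinv hS h = Sinv h := rfl

lemma Sinv_mul (hS : GYD.IsAntipodeInv k H Sinv) (x y : H) : Sinv (x * y) = Sinv y * Sinv x := by
  have hi : Function.Injective (HopfAlgebra.antipode k (A := H)) :=
      Function.LeftInverse.injective hS.2
  apply hi; rw [HopfAlgebra.antipode_mul_antidistrib, hS.1, hS.1, hS.1]

lemma Sinv_one (hS : GYD.IsAntipodeInv k H Sinv) : Sinv 1 = 1 := by
  have := hS.2 1
  rwa [HopfAlgebra.antipode_one] at this

lemma sum_Sinv_mul (hS : GYD.IsAntipodeInv k H Sinv) (h : H) (s : Finset ℕ) (p q : ℕ → H)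
    (e : comul (R := k) h = ∑ i ∈ s, p i ⊗ₜ[k] q i) :
    ∑ i ∈ s, Sinv (q i) * p i = algebraMap k H (counit (R := k) h) := by
  have hi : Function.Injective (HopfAlgebra.antipode k (A := H)) :=
      Function.LeftInverse.injective hS.2
  apply hi
  have := HopfAlgebra.mul_antipode_rTensor_comul_apply (R := k) h
  rw [e] at this
  simp only [map_sum, LinearMap.rTensor_tmul, LinearMap.mul'_apply] at this
  simp only [map_sum, HopfAlgebra.antipode_mul_antidistrib, hS.1, this]
  rw [Algebra.algebraMap_eq_smul_one, map_smul, HopfAlgebra.antipode_one]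

lemma sum_mul_Sinv (hS : GYD.IsAntipodeInv k H Sinv) (h : H) (s : Finset ℕ) (p q : ℕ → H)
    (e : comul (R := k) h = ∑ i ∈ s, p i ⊗ₜ[k] q i) :
    ∑ i ∈ s, q i * Sinv (p i) = algebraMap k H (counit (R := k) h) := by
  have hi : Function.Injective (HopfAlgebra.antipode k (A := H)) :=
      Function.LeftInverse.injective hS.2
  apply hi
  have := HopfAlgebra.mul_antipode_lTensor_comul_apply (R := k) h
  rw [e] at this
  simp only [map_sum, LinearMap.lTensor_tmul, LinearMap.mul'_apply] at this
  simp only [map_sum, HopfAlgebra.antipode_mul_antidistrib, hS.1, this]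
  rw [Algebra.algebraMap_eq_smul_one, map_smul, HopfAlgebra.antipode_one]

variable {B : Type} [Ring B] [Algebra k B]

lemma conv_apply (f g : WithConv (H →ₗ[k] B)) (h : H) (s : Finset ℕ) (p q : ℕ → H)
    (e : comul (R := k) h = ∑ i ∈ s, p i ⊗ₜ[k] q i) :
    (f * g) h = ∑ i ∈ s, f (p i) * g (q i) := by
  rw [LinearMap.convMul_apply, e]
  simp

lemma conv_apply3 (f g l : WithConv (H →ₗ[k] B)) (h : H) (s : Finset ℕ) (a b c : ℕ → H)
    (e : LinearMap.rTensor H (comul (R := k)) (comul (R := k) h)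
      = ∑ i ∈ s, (a i ⊗ₜ[k] b i) ⊗ₜ[k] c i) :
    (f * g * l) h = ∑ i ∈ s, f (a i) * g (b i) * l (c i) := by
  have key : (f * g * l) h = LinearMap.mul' k B (TensorProduct.map
      (LinearMap.mul' k B ∘ₗ TensorProduct.map f.ofConv g.ofConv) l.ofConv
      (LinearMap.rTensor H (comul (R := k)) (comul (R := k) h))) := by
    obtain ⟨s, p, q, e⟩ := exists_rep (comul (R := k) h)
    rw [conv_apply _ _ h s p q e, e]
    simp
  rw [key, e]
  simp

/-- Constant elements of the convolution algebra. -/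
def cst (b : B) : WithConv (H →ₗ[k] B) := toConv ((counit (R := k) (A := H)).smulRight b)

lemma cst_apply (b : B) (h : H) : (cst b : WithConv (H →ₗ[k] B)) h = counit (R := k) h • b := rfl

lemma cst_mul_apply (b : B) (f : WithConv (H →ₗ[k] B)) (h : H) :
    ((cst b * f : WithConv (H →ₗ[k] B))) h = b * f h := by
  obtain ⟨s, p, q, e⟩ := exists_rep (comul (R := k) h)
  rw [conv_apply _ _ h s p q e]
  have := Coalgebra.rTensor_counit_comul (R := k) h
  rw [e] at this
  have := congrArg (fun x => f.ofConv (TensorProduct.lid k H x)) this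
  simp only [map_sum, LinearMap.rTensor_tmul, TensorProduct.lid_tmul, one_smul, map_smul] at this
  rw [← this, Finset.mul_sum]
  simp [cst_apply]

lemma mul_cst_apply (b : B) (f : WithConv (H →ₗ[k] B)) (h : H) :
    ((f * cst b : WithConv (H →ₗ[k] B))) h = f h * b := by
  obtain ⟨s, p, q, e⟩ := exists_rep (comul (R := k) h)
  rw [conv_apply _ _ h s p q e]
  have := Coalgebra.lTensor_counit_comul (R := k) h
  rw [e] at this
  have := congrArg (fun x => f.ofConv (TensorProduct.rid k H x)) this
  simp only [map_sum, LinearMap.lTensor_tmul, TensorProduct.rid_tmul, one_smul, map_smul] at this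
  rw [← this, Finset.sum_mul]
  simp [cst_apply]

lemma conv_ext {f g : WithConv (H →ₗ[k] B)} (e : ∀ h, f h = g h) : f = g :=
  WithConv.ext (LinearMap.ext e)

lemma cst_mul (a b : B) : (cst (a * b) : WithConv (H →ₗ[k] B)) = cst a * cst b := by
  apply conv_ext; intro h
  rw [cst_mul_apply, cst_apply, cst_apply]; simp

lemma cst_one : (cst (1 : B) : WithConv (H →ₗ[k] B)) = 1 := by
  apply conv_ext; intro h
  rw [cst_apply, LinearMap.convOne_apply, Algebra.algebraMap_eq_smul_one]

lemma conv_inv_right (f : H →ₗ[k] B) (f1 : f 1 = 1) (fm : ∀ x y, f (x * y) = f y * f x) :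
    toConv f * toConv (f ∘ₗ SL Sinv hS) = 1 := by
  apply conv_ext; intro h
  obtain ⟨s, p, q, e⟩ := exists_rep (comul (R := k) h)
  rw [conv_apply _ _ h s p q e, LinearMap.convOne_apply]
  simp only [LinearMap.comp_apply, SL_apply, ← fm]
  rw [← map_sum, sum_Sinv_mul hS h s p q e, Algebra.algebraMap_eq_smul_one, map_smul, f1,
    Algebra.algebraMap_eq_smul_one]

lemma conv_inv_left (f : H →ₗ[k] B) (f1 : f 1 = 1) (fm : ∀ x y, f (x * y) = f y * f x) :
    toConv (f ∘ₗ SL Sinv hS) * toConv f = 1 := by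
  apply conv_ext; intro h
  obtain ⟨s, p, q, e⟩ := exists_rep (comul (R := k) h)
  rw [conv_apply _ _ h s p q e, LinearMap.convOne_apply]
  simp only [LinearMap.comp_apply, SL_apply, ← fm]
  rw [← map_sum, sum_mul_Sinv hS h s p q e, Algebra.algebraMap_eq_smul_one, map_smul, f1,
    Algebra.algebraMap_eq_smul_one]

end generic

section comod
variable {k H : Type} [Field k] [Ring H] [HopfAlgebra k H]
  {M : Type} [AddCommGroup M] [Module k M]

/-- Evaluation `End(M) ⊗ Q → Hom(M, M ⊗ Q)`. -/
def Phi (Q : Type) [AddCommGroup Q] [Module k Q] :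
    Module.End k M ⊗[k] Q →ₗ[k] M →ₗ[k] M ⊗[k] Q :=
  TensorProduct.rTensorHomToHomRTensor (.id k) M M Q

lemma Phi_tmul {Q : Type} [AddCommGroup Q] [Module k Q] (f : Module.End k M) (q : Q) (m : M) :
    Phi Q (f ⊗ₜ[k] q) m = f m ⊗ₜ q := rfl

lemma Phi_inj [FiniteDimensional k M] (Q : Type) [AddCommGroup Q] [Module k Q] :
    Function.Injective (Phi (k := k) (M := M) Q) := by
  intro x y h
  apply (rTensorHomEquivHomRTensor k M M Q).injective
  rw [rTensorHomEquivHomRTensor_apply, rTensorHomEquivHomRTensor_apply]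
  exact h

lemma Phi_surj [FiniteDimensional k M] (Q : Type) [AddCommGroup Q] [Module k Q] 
    (f : M →ₗ[k] M ⊗[k] Q) : ∃ U, Phi Q U = f := by
  refine ⟨(rTensorHomEquivHomRTensor k M M Q).symm f, ?_⟩
  have := rTensorHomEquivHomRTensor_apply ((rTensorHomEquivHomRTensor k M M Q).symm f)
  rw [LinearEquiv.apply_symm_apply] at this
  exact this.symm

/-- `X ↦ X₁₂` -/
def j12 : Module.End k M ⊗[k] H →ₐ[k] Module.End k M ⊗[k] (H ⊗[k] H) :=
  Algebra.TensorProduct.map (AlgHom.id k _) Algebra.TensorProduct.includeLeft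
/-- `X ↦ X₁₃` -/
def j13 : Module.End k M ⊗[k] H →ₐ[k] Module.End k M ⊗[k] (H ⊗[k] H) :=
  Algebra.TensorProduct.map (AlgHom.id k _) Algebra.TensorProduct.includeRight
/-- `id ⊗ Δ` -/
def jD : Module.End k M ⊗[k] H →ₐ[k] Module.End k M ⊗[k] (H ⊗[k] H) :=
  Algebra.TensorProduct.map (AlgHom.id k _) (Bialgebra.comulAlgHom k H)

lemma j12_tmul (f : Module.End k M) (h : H) : j12 (f ⊗ₜ[k] h) = f ⊗ₜ (h ⊗ₜ 1) := by simp [j12]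
lemma j13_tmul (f : Module.End k M) (h : H) : j13 (f ⊗ₜ[k] h) = f ⊗ₜ (1 ⊗ₜ h) := by simp [j13]
lemma jD_tmul (f : Module.End k M) (h : H) : jD (f ⊗ₜ[k] h) = f ⊗ₜ comul (R := k) h := by
  simp [jD]

/-- The left action of `End(M) ⊗ H` on `M ⊗ H`. -/
def LA : Module.End k M ⊗[k] H →ₗ[k] M ⊗[k] H →ₗ[k] M ⊗[k] H :=
  TensorProduct.homTensorHomMap (.id k) M H M H ∘ₗ LinearMap.lTensor _ (LinearMap.mul k H)

lemma LA_tmul_tmul (f : Module.End k M) (h x : H) (v : M) :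
    LA (f ⊗ₜ[k] h) (v ⊗ₜ[k] x) = f v ⊗ₜ (h * x) := by simp [LA]

lemma Phi_mul (X Y : Module.End k M ⊗[k] H) (m : M) :
    Phi H (X * Y) m = LA X (Phi H Y m) := by
  induction X using TensorProduct.induction_on with
  | zero => simp
  | add X X' h h' => simp only [add_mul, map_add, LinearMap.add_apply, h, h']
  | tmul f h =>
    induction Y using TensorProduct.induction_on with
    | zero => simp
    | add X X' h h' => simp only [mul_add, map_add, LinearMap.add_apply, h, h']
    | tmul g l =>
      rw [Algebra.TensorProduct.tmul_mul_tmul, Phi_tmul, Phi_tmul, LA_tmul_tmul]; rfl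

lemma LA_tmul (X : Module.End k M ⊗[k] H) (v : M) (x : H) :
    LA X (v ⊗ₜ x) = LinearMap.lTensor M (LinearMap.mulRight k x) (Phi H X v) := by
  induction X using TensorProduct.induction_on with
  | zero => simp
  | add X X' h h' => simp only [map_add, LinearMap.add_apply, h, h']
  | tmul f h => rw [LA_tmul_tmul, Phi_tmul]; simp

lemma Phi_j12_j13 (X Y : Module.End k M ⊗[k] H) (m : M) :
    Phi (H ⊗[k] H) (j12 X * j13 Y) m
      = TensorProduct.assoc k M H H (LinearMap.rTensor H (Phi H X) (Phi H Y m)) := by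
  induction X using TensorProduct.induction_on with
  | zero => simp
  | add X X' h h' =>
    simp only [add_mul, map_add, LinearMap.add_apply, h, h', LinearMap.rTensor_add]
  | tmul f h =>
    induction Y using TensorProduct.induction_on with
    | zero => simp
    | add X X' h h' => simp only [mul_add, map_add, LinearMap.add_apply, h, h']
    | tmul g l =>
      rw [j12_tmul, j13_tmul, Algebra.TensorProduct.tmul_mul_tmul, Phi_tmul, Phi_tmul]
      simp [Phi_tmul]

lemma Phi_jD (X : Module.End k M ⊗[k] H) (m : M) :
    Phi (H ⊗[k] H) (jD X) m = LinearMap.lTensor M (comul (R := k)) (Phi H X m) := by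
  induction X using TensorProduct.induction_on with
  | zero => simp
  | add X X' h h' => simp only [map_add, LinearMap.add_apply, h, h']
  | tmul f h => rw [jD_tmul, Phi_tmul, Phi_tmul]; simp

lemma jD_eq [FiniteDimensional k M] (U : Module.End k M ⊗[k] H)
    (hc : ∀ m : M, LinearMap.rTensor H (Phi H U) (Phi H U m)
      = (TensorProduct.assoc k M H H).symm
          (LinearMap.lTensor M (Coalgebra.comul (R := k)) (Phi H U m))) :
    jD U = j12 U * j13 U := by
  apply Phi_inj
  apply LinearMap.ext
  intro m
  rw [Phi_jD, Phi_j12_j13, hc, LinearEquiv.apply_symm_apply]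

/-- `id ⊗ ε` -/
def eE : Module.End k M ⊗[k] H →ₐ[k] Module.End k M :=
  (Algebra.TensorProduct.rid k k _).toAlgHom.comp
    (Algebra.TensorProduct.map (AlgHom.id k _) (Bialgebra.counitAlgHom k H))

lemma eE_tmul (f : Module.End k M) (h : H) : eE (f ⊗ₜ[k] h) = counit (R := k) h • f := by
  simp [eE]

lemma eE_apply (X : Module.End k M ⊗[k] H) (m : M) :
    eE X m = TensorProduct.rid k M (LinearMap.lTensor M (counit (R := k)) (Phi H X m)) := by
  induction X using TensorProduct.induction_on with
  | zero => simp
  | add X X' h h' => simp only [map_add, LinearMap.add_apply, h, h']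
  | tmul f h => rw [eE_tmul, Phi_tmul]; simp

lemma mulS_left (X Y : Module.End k M ⊗[k] H) :
    LinearMap.lTensor _ (HopfAlgebra.antipode k) X * Y = LinearMap.lTensor _
      (LinearMap.mul' k H ∘ₗ LinearMap.rTensor H (HopfAlgebra.antipode k)) (j12 X * j13 Y) := by
  induction X using TensorProduct.induction_on with
  | zero => simp
  | add X X' h h' => simp only [add_mul, map_add, h, h']
  | tmul f h =>
    induction Y using TensorProduct.induction_on with
    | zero => simp
    | add X X' h h' => simp only [mul_add, map_add, h, h']
    | tmul g l => rw [j12_tmul, j13_tmul]; simp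

lemma mulS_right (X Y : Module.End k M ⊗[k] H) :
    X * LinearMap.lTensor _ (HopfAlgebra.antipode k) Y = LinearMap.lTensor _
      (LinearMap.mul' k H ∘ₗ LinearMap.lTensor H (HopfAlgebra.antipode k)) (j12 X * j13 Y) := by
  induction X using TensorProduct.induction_on with
  | zero => simp
  | add X X' h h' => simp only [add_mul, map_add, h, h']
  | tmul f h =>
    induction Y using TensorProduct.induction_on with
    | zero => simp
    | add X X' h h' => simp only [mul_add, map_add, h, h']
    | tmul g l => rw [j12_tmul, j13_tmul]; simp

lemma jD_left (X : Module.End k M ⊗[k] H) : LinearMap.lTensor _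
      (LinearMap.mul' k H ∘ₗ LinearMap.rTensor H (HopfAlgebra.antipode k)) (jD X)
      = eE X ⊗ₜ 1 := by
  induction X using TensorProduct.induction_on with
  | zero => simp
  | add X X' h h' => simp only [map_add, h, h', TensorProduct.add_tmul]
  | tmul f h =>
    rw [jD_tmul, eE_tmul, LinearMap.lTensor_tmul, LinearMap.comp_apply,
      HopfAlgebra.mul_antipode_rTensor_comul_apply, Algebra.algebraMap_eq_smul_one,
      TensorProduct.tmul_smul, TensorProduct.smul_tmul']

lemma jD_right (X : Module.End k M ⊗[k] H) : LinearMap.lTensor _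
      (LinearMap.mul' k H ∘ₗ LinearMap.lTensor H (HopfAlgebra.antipode k)) (jD X)
      = eE X ⊗ₜ 1 := by
  induction X using TensorProduct.induction_on with
  | zero => simp
  | add X X' h h' => simp only [map_add, h, h', TensorProduct.add_tmul]
  | tmul f h =>
    rw [jD_tmul, eE_tmul, LinearMap.lTensor_tmul, LinearMap.comp_apply,
      HopfAlgebra.mul_antipode_lTensor_comul_apply, Algebra.algebraMap_eq_smul_one,
      TensorProduct.tmul_smul, TensorProduct.smul_tmul']

lemma Phi_S (X : Module.End k M ⊗[k] H) (m : M) :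
    Phi H (LinearMap.lTensor _ (HopfAlgebra.antipode k) X) m
      = LinearMap.lTensor M (HopfAlgebra.antipode k) (Phi H X m) := by
  induction X using TensorProduct.induction_on with
  | zero => simp
  | add X X' h h' => simp only [map_add, LinearMap.add_apply, h, h']
  | tmul f h => rw [Phi_tmul]; simp [Phi_tmul]

/-- `End(M)ᵒᵖ ⊗ H ≃ End(M) ⊗ H` -/
def tau : (Module.End k M)ᵐᵒᵖ ⊗[k] H ≃ₗ[k] Module.End k M ⊗[k] H :=
  TensorProduct.congr (MulOpposite.opLinearEquiv k).symm (LinearEquiv.refl k H)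

lemma tau_tmul (u : (Module.End k M)ᵐᵒᵖ) (h : H) : tau (u ⊗ₜ[k] h) = u.unop ⊗ₜ h := rfl

lemma Phi_tau (X : (Module.End k M)ᵐᵒᵖ ⊗[k] H) (m : M) :
    Phi H (tau X) m = LinearMap.rTensor H ((LinearMap.applyₗ (R := k) m).comp
        (MulOpposite.opLinearEquiv k).symm.toLinearMap) X := by
  induction X using TensorProduct.induction_on with
  | zero => simp
  | add X X' h h' => simp only [map_add, LinearMap.add_apply, h, h']
  | tmul f h => rw [tau_tmul, Phi_tmul]; simp

lemma tau_coact [FiniteDimensional k M] (U : Module.End k M ⊗[k] H)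
    (coactO : (Module.End k M)ᵐᵒᵖ →ₗ[k] (Module.End k M)ᵐᵒᵖ ⊗[k] H)
    (h : GYD.EndOpCoactChar k H (Phi H U) coactO) (u : (Module.End k M)ᵐᵒᵖ) :
    tau (coactO u) = U * (u.unop ⊗ₜ 1) * LinearMap.lTensor _ (HopfAlgebra.antipode k) U := by
  apply Phi_inj
  apply LinearMap.ext
  intro m
  obtain ⟨t, m₀, m₁, e⟩ := exists_rep (Phi H U m)
  choose r n₀ n₁ e' using fun j => exists_rep (Phi H U (u.unop (m₀ j)))
  rw [Phi_tau, h u m t m₀ m₁ r n₀ n₁ e (fun j _ => e' j), mul_assoc, Phi_mul, Phi_mul, Phi_S, e]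
  simp only [map_sum, LinearMap.lTensor_tmul, LA_tmul_tmul, one_mul]
  simp only [LA_tmul, e', map_sum, LinearMap.lTensor_tmul, LinearMap.mulRight_apply]

lemma tau_jD (X : (Module.End k M)ᵐᵒᵖ ⊗[k] H) : TensorProduct.assoc k (Module.End k M) H H
      (TensorProduct.congr tau (LinearEquiv.refl k H) ((TensorProduct.assoc k _ H H).symm
          (LinearMap.lTensor _ (Coalgebra.comul (R := k)) X))) = jD (tau X) := by
  induction X using TensorProduct.induction_on with
  | zero => simp
  | add X X' h h' => simp only [map_add, h, h']
  | tmul f h =>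
    rw [tau_tmul, jD_tmul, LinearMap.lTensor_tmul]
    induction comul (R := k) h using TensorProduct.induction_on with
    | zero => simp
    | add X X' h h' => simp only [map_add, TensorProduct.tmul_add, h, h']
    | tmul a b => simp [tau_tmul]

lemma assoc_j12 (Y : Module.End k M ⊗[k] H) (h : H) : TensorProduct.assoc k (Module.End k M) H H
      (Y ⊗ₜ h) = j12 Y * (1 ⊗ₜ (1 ⊗ₜ h)) := by
  induction Y using TensorProduct.induction_on with
  | zero => simp
  | add X X' h h' => simp only [map_add, h, h', TensorProduct.add_tmul, add_mul]
  | tmul f l => rw [j12_tmul]; simp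

lemma j12_comm (Y : Module.End k M ⊗[k] H) (h : H) : j12 Y * (1 ⊗ₜ (1 ⊗ₜ h))
      = (1 ⊗ₜ (1 ⊗ₜ h)) * j12 Y := by
  induction Y using TensorProduct.induction_on with
  | zero => simp
  | add X X' h h' => simp only [map_add, h, h', mul_add, add_mul]
  | tmul f l => rw [j12_tmul]; simp

lemma tau_rho (U V : Module.End k M ⊗[k] H)
    (coactO : (Module.End k M)ᵐᵒᵖ →ₗ[k] (Module.End k M)ᵐᵒᵖ ⊗[k] H)
    (hc : ∀ u, tau (coactO u) = U * (u.unop ⊗ₜ 1) * V) (X : (Module.End k M)ᵐᵒᵖ ⊗[k] H) :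
    TensorProduct.assoc k (Module.End k M) H H
      (TensorProduct.congr tau (LinearEquiv.refl k H) (LinearMap.rTensor H coactO X))
      = j12 U * j13 (tau X) * j12 V := by
  induction X using TensorProduct.induction_on with
  | zero => rw [map_zero, map_zero, map_zero, map_zero, map_zero, mul_zero, zero_mul]
  | add X X' h h' =>
    rw [map_add, map_add, map_add, h, h', map_add, map_add, mul_add, add_mul]
  | tmul u h =>
    rw [LinearMap.rTensor_tmul, TensorProduct.congr_tmul, hc, LinearEquiv.refl_apply, assoc_j12,
      map_mul, map_mul, mul_assoc _ (j12 V), j12_comm, tau_tmul, j13_tmul, j12_tmul, ← mul_assoc,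
      mul_assoc (j12 U), Algebra.TensorProduct.tmul_mul_tmul, Algebra.TensorProduct.tmul_mul_tmul,
      mul_one, mul_one, one_mul]

lemma coassoc_O (U V : Module.End k M ⊗[k] H) (hUV : U * V = 1) (hVU : V * U = 1)
    (hD : jD U = j12 U * j13 U)
    (coactO : (Module.End k M)ᵐᵒᵖ →ₗ[k] (Module.End k M)ᵐᵒᵖ ⊗[k] H)
    (hc : ∀ u, tau (coactO u) = U * (u.unop ⊗ₜ 1) * V) (u : (Module.End k M)ᵐᵒᵖ) :
    LinearMap.rTensor H coactO (coactO u)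
      = (TensorProduct.assoc k _ H H).symm
          (LinearMap.lTensor _ (Coalgebra.comul (R := k)) (coactO u)) := by
  have hDV : jD V = j13 V * j12 V := by
    apply left_inv_eq_right_inv (a := jD U)
    · rw [← map_mul, hVU, map_one]
    · rw [hD, mul_assoc, ← mul_assoc (j13 U), ← map_mul, hUV, map_one, one_mul, ← map_mul, hUV,
        map_one]
  apply (TensorProduct.congr tau (LinearEquiv.refl k H)).injective
  apply (TensorProduct.assoc k (Module.End k M) H H).injective
  rw [tau_jD, tau_rho U V coactO hc, hc, map_mul, map_mul, map_mul, map_mul, hD, hDV, j13_tmul,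
    jD_tmul, Bialgebra.comul_one, Algebra.TensorProduct.one_def]
  simp only [mul_assoc]

lemma counit_O (U V : Module.End k M ⊗[k] H) (hU : eE U = 1) (hV : eE V = 1)
    (coactO : (Module.End k M)ᵐᵒᵖ →ₗ[k] (Module.End k M)ᵐᵒᵖ ⊗[k] H)
    (hc : ∀ u, tau (coactO u) = U * (u.unop ⊗ₜ 1) * V) (u : (Module.End k M)ᵐᵒᵖ) :
    TensorProduct.rid k _ (LinearMap.lTensor _ (counit (R := k)) (coactO u)) = u := by
  have h : ∀ X : (Module.End k M)ᵐᵒᵖ ⊗[k] H,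
      (TensorProduct.rid k _ (LinearMap.lTensor _ (counit (R := k)) X)).unop = eE (tau X) := by
    intro X
    induction X using TensorProduct.induction_on with
    | zero => simp
    | add X X' h h' => simp only [map_add, h, h', MulOpposite.unop_add]
    | tmul f h => rw [tau_tmul, eE_tmul]; simp
  apply MulOpposite.unop_injective
  rw [h, hc, map_mul, map_mul, hU, hV, eE_tmul]
  simp

end comod

section final
variable {k H : Type} [Field k] [Ring H] [HopfAlgebra k H]
  {M : Type} [AddCommGroup M] [Module k M]

/-- `h ↦ op (1 ⊗ h)` -/
def iH : H →ₗ[k] (Module.End k M ⊗[k] H)ᵐᵒᵖ :=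
  (MulOpposite.opLinearEquiv k).toLinearMap ∘ₗ
    (Algebra.TensorProduct.includeRight : H →ₐ[k] Module.End k M ⊗[k] H).toLinearMap

/-- `f ↦ op (f ⊗ 1)` -/
def iE : (Module.End k M) →ₗ[k] (Module.End k M ⊗[k] H)ᵐᵒᵖ :=
  (MulOpposite.opLinearEquiv k).toLinearMap ∘ₗ
    (Algebra.TensorProduct.includeLeft : Module.End k M →ₐ[k] Module.End k M ⊗[k] H).toLinearMap

lemma iH_apply (h : H) : iH (k := k) (M := M) h = MulOpposite.op (1 ⊗ₜ h) := rfl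
lemma iE_apply (h : Module.End k M) : iE (k := k) (H := H) h = MulOpposite.op (h ⊗ₜ 1) := rfl

/-- abstract group-theoretic core -/
lemma core {R : Type} [Ring R] {U V s p c i j u : R} (hUV : U * V = 1)
    (hsp : s * p = 1) (hps : p * s = 1) (hij : i * j = 1) (hVU : V * U = 1)
    (h : p * U = c * (U * p * i)) (hc : c * u = u * c) :
    V * (s * u * p) * U = j * (s * (V * u * U) * p) * i := by
  have e0 : V * (s * u * p) * U = V * s * u * p * U := by noncomm_ring
  rw [e0]
  have hc1 : c = (p * U) * (j * s * V) := by
    rw [h]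
    calc c = c * (U * (p * (i * j) * s) * V) := by rw [hij, mul_one, hps, mul_one, hUV, mul_one]
      _ = _ := by noncomm_ring
  have : V * s * u * p * U = V * s * (c * u) * (U * p * i) := by
    rw [hc]
    calc V * s * u * p * U = V * s * u * (p * U) := by noncomm_ring
      _ = _ := by rw [h]; noncomm_ring
  rw [this, hc1]
  calc _ = V * (s * p) * U * (j * s * V) * u * (U * p * i) := by noncomm_ring
    _ = _ := by rw [hsp, mul_one, hVU]; noncomm_ring

end final
end GYDaux
namespace GYDaux
open Coalgebra WithConv
section final2
variable {k H : Type} [Field k] [Ring H] [HopfAlgebra k H]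
  {M : Type} [AddCommGroup M] [Module k M]

lemma conv_assoc {B : Type} [Ring B] [Algebra k B] (f g l : WithConv (H →ₗ[k] B)) :
    f * (g * l) = f * g * l := (mul_assoc f g l).symm

lemma exists_rep3 (x : (H ⊗[k] H) ⊗[k] H) : ∃ (s : Finset ℕ) (a b c : ℕ → H),
    x = ∑ i ∈ s, (a i ⊗ₜ[k] b i) ⊗ₜ[k] c i := by
  obtain ⟨s, X, c, rfl⟩ := exists_rep x
  choose t a b e using fun i => exists_rep (X i)
  refine ⟨(s.sigma t).map ⟨fun z => Nat.pair z.1 z.2, ?_⟩, fun z => a z.unpair.1 z.unpair.2,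
    fun z => b z.unpair.1 z.unpair.2, fun z => c z.unpair.1, ?_⟩
  · rintro ⟨x, y⟩ ⟨x', y'⟩ h
    have := Nat.pair_eq_pair.1 h
    simp only at this
    obtain ⟨rfl, rfl⟩ := this
    rfl
  · rw [Finset.sum_map, Finset.sum_sigma]
    apply Finset.sum_congr rfl
    intro i _
    rw [e i, TensorProduct.sum_tmul]
    apply Finset.sum_congr rfl
    intro j _
    change _ = (a (Nat.unpair (Nat.pair i j)).1 (Nat.unpair (Nat.pair i j)).2 ⊗ₜ[k]
      b (Nat.unpair (Nat.pair i j)).1 (Nat.unpair (Nat.pair i j)).2) ⊗ₜ[k]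
      c (Nat.unpair (Nat.pair i j)).1
    rw [Nat.unpair_pair]

lemma comul_symm (β : H ≃ₗ[k] H) (hβ : GYD.IsHopfAut k H β) (h : H) :
    comul (R := k) (β.symm h)
      = TensorProduct.map β.symm.toLinearMap β.symm.toLinearMap (comul (R := k) h) := by
  have := hβ.2.2.1 (β.symm h)
  rw [β.apply_symm_apply] at this
  rw [this, ← LinearMap.comp_apply, ← TensorProduct.map_comp]
  simp

lemma comul2_symm (β : H ≃ₗ[k] H) (hβ : GYD.IsHopfAut k H β) (h : H) (s : Finset ℕ)
    (a b c : ℕ → H) (e : LinearMap.rTensor H (comul (R := k)) (comul (R := k) h)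
      = ∑ i ∈ s, (a i ⊗ₜ[k] b i) ⊗ₜ[k] c i) :
    LinearMap.rTensor H (comul (R := k)) (comul (R := k) (β.symm h))
      = ∑ i ∈ s, (β.symm (a i) ⊗ₜ[k] β.symm (b i)) ⊗ₜ[k] β.symm (c i) := by
  have : LinearMap.rTensor H (comul (R := k)) (comul (R := k) (β.symm h))
      = TensorProduct.map (TensorProduct.map β.symm.toLinearMap β.symm.toLinearMap)
        β.symm.toLinearMap (LinearMap.rTensor H (comul (R := k)) (comul (R := k) h)) := by
    rw [comul_symm β hβ]
    induction comul (R := k) h using TensorProduct.induction_on with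
    | zero => simp
    | add x y hx hy => simp only [map_add, hx, hy]
    | tmul x y =>
      simp only [TensorProduct.map_tmul, LinearMap.rTensor_tmul, LinearEquiv.coe_coe]
      rw [comul_symm β hβ]
  rw [this, e]
  simp

variable (Sinv : H → H) (hS : GYD.IsAntipodeInv k H Sinv) (P : H →ₗ[k] Module.End k M)

/-- `π` as a map to the opposite algebra -/
def fO : H →ₗ[k] (Module.End k M)ᵐᵒᵖ := (MulOpposite.opLinearEquiv k).toLinearMap ∘ₗ P

lemma fO_apply (h : H) : fO P h = MulOpposite.op (P h) := rfl

/-- `π` as a map to the opposite algebra of `End(M) ⊗ H` -/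
def fA : H →ₗ[k] (Module.End k M ⊗[k] H)ᵐᵒᵖ := iE ∘ₗ P

lemma fA_apply (h : H) : fA P h = MulOpposite.op (P h ⊗ₜ 1) := rfl

lemma act_conv (actO : H →ₗ[k] (Module.End k M)ᵐᵒᵖ →ₗ[k] (Module.End k M)ᵐᵒᵖ)
    (hactO : ∀ (h : H) (u : (Module.End k M)ᵐᵒᵖ) (s : Finset ℕ) (p q : ℕ → H),
      Coalgebra.comul (R := k) h = ∑ i ∈ s, p i ⊗ₜ[k] q i →
      (actO h u).unop = ∑ i ∈ s, P (q i) * u.unop * P (Sinv (p i)))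
    (h : H) (u : (Module.End k M)ᵐᵒᵖ) :
    actO h u = (toConv (fO P ∘ₗ SL Sinv hS) * cst u * toConv (fO P) :
      WithConv (H →ₗ[k] (Module.End k M)ᵐᵒᵖ)) h := by
  obtain ⟨s, p, q, e⟩ := exists_rep (comul (R := k) h)
  rw [conv_apply _ _ h s p q e]
  apply MulOpposite.unop_injective
  rw [hactO h u s p q e, Finset.unop_sum]
  apply Finset.sum_congr rfl
  intro i _
  rw [mul_cst_apply]
  simp [fO_apply, SL_apply, mul_assoc]

lemma act_convA (actO : H →ₗ[k] (Module.End k M)ᵐᵒᵖ →ₗ[k] (Module.End k M)ᵐᵒᵖ)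
    (hactO : ∀ (h : H) (u : (Module.End k M)ᵐᵒᵖ) (s : Finset ℕ) (p q : ℕ → H),
      Coalgebra.comul (R := k) h = ∑ i ∈ s, p i ⊗ₜ[k] q i →
      (actO h u).unop = ∑ i ∈ s, P (q i) * u.unop * P (Sinv (p i)))
    (h : H) (X : (Module.End k M)ᵐᵒᵖ ⊗[k] H) :
    MulOpposite.op (tau (LinearMap.rTensor H (actO h) X)) =
      (toConv (fA P ∘ₗ SL Sinv hS) * cst (MulOpposite.op (tau X)) * toConv (fA P) :
      WithConv (H →ₗ[k] (Module.End k M ⊗[k] H)ᵐᵒᵖ)) h := by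
  obtain ⟨s, p, q, e⟩ := exists_rep (comul (R := k) h)
  rw [conv_apply _ _ h s p q e]
  simp only [mul_cst_apply]
  induction X using TensorProduct.induction_on with
  | zero => simp
  | add X Y hX hY =>
    simp only [map_add, MulOpposite.op_add, hX, hY, mul_add, add_mul, Finset.sum_add_distrib]
  | tmul u y =>
    apply MulOpposite.unop_injective
    rw [MulOpposite.unop_op, LinearMap.rTensor_tmul, tau_tmul, hactO h u s p q e,
      Finset.unop_sum, TensorProduct.sum_tmul]
    apply Finset.sum_congr rfl
    intro i _
    simp [fA_apply, SL_apply, mul_assoc, tau_tmul]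

lemma YD_conv [FiniteDimensional k M] (α β : H ≃ₗ[k] H) (hβ : GYD.IsHopfAut k H β)
    (actM : H →ₗ[k] M →ₗ[k] M) (U : Module.End k M ⊗[k] H)
    (hM : GYD.IsYD k H Sinv ⇑α ⇑β actM (Phi H U)) :
    (toConv (fA (actM ∘ₗ β.symm.toLinearMap)) * cst (MulOpposite.op U) :
      WithConv (H →ₗ[k] (Module.End k M ⊗[k] H)ᵐᵒᵖ)) =
    toConv (iH ∘ₗ α.toLinearMap ∘ₗ SL Sinv hS ∘ₗ β.symm.toLinearMap) *
      (cst (MulOpposite.op U) * toConv (fA (actM ∘ₗ β.symm.toLinearMap)) * toConv iH) := by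
  apply conv_ext
  intro h
  obtain ⟨s, a, b, c, e⟩ := exists_rep3
    (LinearMap.rTensor H (comul (R := k)) (comul (R := k) h))
  rw [conv_assoc, conv_apply3 _ _ _ h s a b c e]
  simp only [mul_cst_apply, cst_mul_apply]
  apply MulOpposite.unop_injective
  apply Phi_inj
  apply LinearMap.ext
  intro m
  obtain ⟨t, m₀, m₁, e'⟩ := exists_rep (Phi H U m)
  have := hM.2.2.2.2 (β.symm h) m s t _ _ _ m₀ m₁ (comul2_symm β hβ h s a b c e) e'
  rw [MulOpposite.unop_mul, MulOpposite.unop_op, fA_apply, MulOpposite.unop_op, Phi_mul, Phi_tmul,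
    LA_tmul, Finset.unop_sum, map_sum, LinearMap.sum_apply]
  simp only [LinearMap.comp_apply, LinearEquiv.coe_coe, LinearMap.mulRight_one, LinearMap.lTensor_id,
    LinearMap.id_apply]
  rw [this]
  apply Finset.sum_congr rfl
  intro i _
  simp only [fA_apply, iH_apply, SL_apply, MulOpposite.unop_mul, MulOpposite.unop_op, Phi_mul,
    Phi_tmul, LA_tmul _ m, e', map_sum, LinearMap.lTensor_tmul, LA_tmul_tmul,
    LinearMap.mulRight_apply, LinearMap.comp_apply, LinearEquiv.coe_coe, Module.End.one_apply,
    one_mul, LinearEquiv.apply_symm_apply, mul_assoc]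

end final2
end GYDaux

theorem statement_8
    (k H : Type) [Field k] [Ring H] [HopfAlgebra k H]
    (Sinv : H → H) (hS : GYD.IsAntipodeInv k H Sinv)
    (α β : H ≃ₗ[k] H)
    (hα : GYD.IsHopfAut k H α) (hβ : GYD.IsHopfAut k H β)
    (M : Type) [AddCommGroup M] [Module k M] [FiniteDimensional k M]
    (actM : H →ₗ[k] M →ₗ[k] M) (coactM : M →ₗ[k] M ⊗[k] H)
    (hM : GYD.IsYD k H Sinv ⇑α ⇑β actM coactM)
    (actO : H →ₗ[k] (Module.End k M)ᵐᵒᵖ →ₗ[k] (Module.End k M)ᵐᵒᵖ)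
    (coactO : (Module.End k M)ᵐᵒᵖ →ₗ[k] (Module.End k M)ᵐᵒᵖ ⊗[k] H)
    (hactO : GYD.EndOpActChar k H ⇑β.symm Sinv actM actO)
    (hcoactO : GYD.EndOpCoactChar k H coactM coactO) :
    GYD.IsYDAlgebra k H Sinv actO coactO := by
  classical
  obtain ⟨U, rfl⟩ := GYDaux.Phi_surj H coactM
  have hM' := hM
  obtain ⟨hM1, hM2, hM3, hM4, -⟩ := hM'
  have hD := GYDaux.jD_eq U hM3
  have hU : GYDaux.eE U = 1 := by
    apply LinearMap.ext; intro m
    rw [GYDaux.eE_apply, hM4]; rfl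
  obtain ⟨V, hV⟩ : ∃ V, V = LinearMap.lTensor (Module.End k M) (HopfAlgebra.antipode k) U :=
    ⟨_, rfl⟩
  have hVU : V * U = 1 := by
    rw [hV, GYDaux.mulS_left, ← hD, GYDaux.jD_left, hU]; rfl
  have hUV : U * V = 1 := by
    rw [hV, GYDaux.mulS_right, ← hD, GYDaux.jD_right, hU]; rfl
  have hVe : GYDaux.eE V = 1 := by
    have := congrArg GYDaux.eE hVU
    rwa [map_mul, hU, mul_one, map_one] at this
  have hc : ∀ u, GYDaux.tau (coactO u) = U * (u.unop ⊗ₜ 1) * V := by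
    intro u
    rw [hV]; exact GYDaux.tau_coact U coactO hcoactO u
  have hθ1 : β.symm 1 = 1 := by rw [LinearEquiv.symm_apply_eq, hβ.2.1]
  have hθm : ∀ x y, β.symm (x * y) = β.symm x * β.symm y := by
    intro x y
    rw [LinearEquiv.symm_apply_eq, hβ.1, LinearEquiv.apply_symm_apply, LinearEquiv.apply_symm_apply]
  obtain ⟨P, hP⟩ : ∃ P : H →ₗ[k] Module.End k M, P = actM ∘ₗ β.symm.toLinearMap := ⟨_, rfl⟩
  have hPa : ∀ h m, P h m = actM (β.symm h) m := by intro h m; rw [hP]; rfl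
  have hP1 : P 1 = 1 := by
    apply LinearMap.ext; intro m; rw [hPa, hθ1, hM1]; rfl
  have hPm : ∀ x y, P (x * y) = P x * P y := by
    intro x y
    apply LinearMap.ext; intro m
    rw [hPa, hθm, hM2, Module.End.mul_apply, hPa, hPa]
  have hact : ∀ (h : H) (u : (Module.End k M)ᵐᵒᵖ) (s : Finset ℕ) (p q : ℕ → H),
      Coalgebra.comul (R := k) h = ∑ i ∈ s, p i ⊗ₜ[k] q i →
      (actO h u).unop = ∑ i ∈ s, P (q i) * u.unop * P (Sinv (p i)) := by
    intro h u s p q e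
    apply LinearMap.ext; intro m
    rw [hactO h u m s p q e, LinearMap.sum_apply]
    simp only [Module.End.mul_apply, hPa]
  have fO1 : GYDaux.fO P 1 = 1 := by rw [GYDaux.fO_apply, hP1]; rfl
  have fOm : ∀ x y, GYDaux.fO P (x * y) = GYDaux.fO P y * GYDaux.fO P x := by
    intro x y; rw [GYDaux.fO_apply, hPm]; rfl
  have fA1 : GYDaux.fA P 1 = 1 := by rw [GYDaux.fA_apply, hP1]; rfl
  have fAm : ∀ x y, GYDaux.fA P (x * y) = GYDaux.fA P y * GYDaux.fA P x := by
    intro x y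
    rw [GYDaux.fA_apply, hPm, GYDaux.fA_apply, GYDaux.fA_apply, ← MulOpposite.op_mul,
      Algebra.TensorProduct.tmul_mul_tmul, mul_one]
  have iH1 : GYDaux.iH (k := k) (M := M) (1 : H) = 1 := rfl
  have iHm : ∀ x y : H, GYDaux.iH (k := k) (M := M) (x * y)
      = GYDaux.iH y * GYDaux.iH x := by
    intro x y
    rw [GYDaux.iH_apply, GYDaux.iH_apply, GYDaux.iH_apply, ← MulOpposite.op_mul,
      Algebra.TensorProduct.tmul_mul_tmul, mul_one]
  have hactc := GYDaux.act_conv Sinv hS P actO hact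
  have hactA := GYDaux.act_convA Sinv hS P actO hact
  have hYD := GYDaux.YD_conv Sinv hS α β hβ actM U hM
  rw [← hP] at hYD
  refine ⟨⟨?_, ?_, GYDaux.coassoc_O U V hUV hVU hD coactO hc,
    GYDaux.counit_O U V hU hVe coactO hc, ?_⟩, ?_, ?_, ?_, ?_⟩
  · intro u
    apply MulOpposite.unop_injective
    rw [hact 1 u {0} (fun _ => 1) (fun _ => 1) (by simp [Algebra.TensorProduct.one_def])]
    simp [GYDaux.Sinv_one hS, hP1]
  · intro g h u
    obtain ⟨s, p, q, e⟩ := GYDaux.exists_rep (Coalgebra.comul (R := k) g)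
    obtain ⟨s', p', q', e'⟩ := GYDaux.exists_rep (Coalgebra.comul (R := k) h)
    apply MulOpposite.unop_injective
    have key : ∀ (x : H), (actO x u).unop = TensorProduct.lift
        (LinearMap.mk₂ k (fun p q => P q * u.unop * P (GYDaux.SL Sinv hS p))
          (by intros; simp [mul_add]) (by intros; simp) (by intros; simp [add_mul])
          (by intros; simp)) (Coalgebra.comul (R := k) x) := by
      intro x
      obtain ⟨s, p, q, e⟩ := GYDaux.exists_rep (Coalgebra.comul (R := k) x)
      rw [hact x u s p q e, e]
      simp [GYDaux.SL_apply]
    rw [key, Bialgebra.comul_mul, e, e', hact g _ s p q e, hact h u s' p' q' e']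
    simp only [Finset.sum_mul, Finset.mul_sum, map_sum,
      Algebra.TensorProduct.tmul_mul_tmul, TensorProduct.lift.tmul, LinearMap.mk₂_apply,
      GYDaux.SL_apply, GYDaux.Sinv_mul hS, hPm, mul_assoc]
    rw [Finset.sum_comm]
  · intro h u s t a b c u₀ u₁ e e'
    apply GYDaux.tau.injective
    apply MulOpposite.op_injective
    have hcore := GYDaux.core (R := WithConv (H →ₗ[k] (Module.End k M ⊗[k] H)ᵐᵒᵖ))
      (U := GYDaux.cst (MulOpposite.op U)) (V := GYDaux.cst (MulOpposite.op V))
      (s := WithConv.toConv (GYDaux.fA P ∘ₗ GYDaux.SL Sinv hS))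
      (p := WithConv.toConv (GYDaux.fA P))
      (c := WithConv.toConv (GYDaux.iH ∘ₗ α.toLinearMap ∘ₗ GYDaux.SL Sinv hS ∘ₗ
        β.symm.toLinearMap))
      (i := WithConv.toConv GYDaux.iH)
      (j := WithConv.toConv (GYDaux.iH ∘ₗ GYDaux.SL Sinv hS))
      (u := GYDaux.cst (MulOpposite.op (u.unop ⊗ₜ 1)))
      (by rw [← GYDaux.cst_mul, ← MulOpposite.op_mul, hVU, MulOpposite.op_one, GYDaux.cst_one])
      (GYDaux.conv_inv_left hS _ fA1 fAm) (GYDaux.conv_inv_right hS _ fA1 fAm)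
      (GYDaux.conv_inv_right hS _ iH1 iHm)
      (by rw [← GYDaux.cst_mul, ← MulOpposite.op_mul, hUV, MulOpposite.op_one, GYDaux.cst_one])
      hYD
      (by
        apply GYDaux.conv_ext; intro x
        rw [GYDaux.mul_cst_apply, GYDaux.cst_mul_apply]
        simp only [LinearMap.comp_apply, GYDaux.iH_apply, ← MulOpposite.op_mul,
          Algebra.TensorProduct.tmul_mul_tmul, mul_one, one_mul])
    have h2 : (GYDaux.cst (MulOpposite.op V) * GYDaux.cst (MulOpposite.op (u.unop ⊗ₜ 1))
        * GYDaux.cst (MulOpposite.op U) : WithConv (H →ₗ[k] (Module.End k M ⊗[k] H)ᵐᵒᵖ))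
        = GYDaux.cst (MulOpposite.op (GYDaux.tau (coactO u))) := by
      rw [← GYDaux.cst_mul, ← GYDaux.cst_mul, hc, mul_assoc]; rfl
    rw [h2] at hcore
    have h3 := congrArg (fun f => f.ofConv h) hcore
    beta_reduce at h3
    have h4 := hactA h (u ⊗ₜ 1)
    rw [GYDaux.tau_tmul] at h4
    rw [GYDaux.mul_cst_apply, GYDaux.cst_mul_apply, ← h4, LinearMap.rTensor_tmul,
      GYDaux.tau_tmul, ← MulOpposite.op_mul, ← MulOpposite.op_mul, ← mul_assoc, ← hc,
      GYDaux.conv_apply3 _ _ _ h s a b c e] at h3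
    simp only [← hactA] at h3
    rw [h3, e']
    apply MulOpposite.unop_injective
    rw [Finset.unop_sum, MulOpposite.unop_op]
    simp only [map_sum, LinearMap.rTensor_tmul, GYDaux.tau_tmul, LinearMap.comp_apply,
      GYDaux.iH_apply, GYDaux.SL_apply, MulOpposite.unop_mul, MulOpposite.unop_op,
      Finset.mul_sum, Finset.sum_mul, Algebra.TensorProduct.tmul_mul_tmul, one_mul, mul_one, id,
      mul_assoc]
  · intro h a b s p q e
    have := GYDaux.conv_apply
      (WithConv.toConv (GYDaux.fO P ∘ₗ GYDaux.SL Sinv hS) * GYDaux.cst a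
        * WithConv.toConv (GYDaux.fO P))
      (WithConv.toConv (GYDaux.fO P ∘ₗ GYDaux.SL Sinv hS) * GYDaux.cst b
        * WithConv.toConv (GYDaux.fO P)) h s p q e
    simp only [← hactc] at this
    rw [← this, hactc, GYDaux.cst_mul]
    congr 2
    have h1 := GYDaux.conv_inv_right hS _ fO1 fOm
    simp only [mul_assoc]
    rw [← mul_assoc (WithConv.toConv (GYDaux.fO P)) (WithConv.toConv _), h1, one_mul]
  · intro h
    rw [hactc, GYDaux.cst_one, mul_one, GYDaux.conv_inv_left hS _ fO1 fOm,
      LinearMap.convOne_apply, Algebra.algebraMap_eq_smul_one]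
  · apply GYDaux.tau.injective
    rw [hc, GYDaux.tau_tmul, MulOpposite.unop_one, ← Algebra.TensorProduct.one_def, mul_one, hUV]
  · intro a b s t a₀ a₁ b₀ b₁ ea eb
    apply GYDaux.tau.injective
    have : GYDaux.tau (coactO (a * b)) = GYDaux.tau (coactO b) * GYDaux.tau (coactO a) := by
      rw [hc, hc, hc, MulOpposite.unop_mul]
      calc _ = U * ((b.unop ⊗ₜ 1) * (a.unop ⊗ₜ 1)) * V := by
            rw [Algebra.TensorProduct.tmul_mul_tmul, mul_one]
        _ = U * (b.unop ⊗ₜ 1) * (V * U) * (a.unop ⊗ₜ 1) * V := by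
            rw [hVU, mul_one, ← mul_assoc]
        _ = _ := by simp only [mul_assoc]
    rw [this, ea, eb]
    simp only [map_sum, GYDaux.tau_tmul, Finset.sum_mul_sum, Algebra.TensorProduct.tmul_mul_tmul,
      MulOpposite.unop_mul]
    rw [Finset.sum_comm]

end
end
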